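/- Let n ≥ 5, p ≥ 1 and 1 < s < (n+4)/(n−4). There exists a constant C > 0, depending only on n, p and s, such that for every nonnegative C⁴ solution U = (u_1, …, u_p) of Δ² u_i = |U|^{s−1} u_i on the open unit ball B₁ ⊂ ℝ^n that extends continuously to the closed ball, one has |U(x)| ≤ C (1 − |x|)^{−4/(s−1)} for all x ∈ B₁. -/

import Mathlib

open MeasureTheory Metric Filter Topology

/-- The Euclidean Laplacian: sum of second partial derivatives. -/
noncomputable def lap {n : ℕ} (u : EuclideanSpace ℝ (Fin n) → ℝ)
    (x : EuclideanSpace ℝ (Fin n)) : ℝ :=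
  ∑ i : Fin n,
    fderiv ℝ (fun y => fderiv ℝ u y (EuclideanSpace.single i 1)) x
      (EuclideanSpace.single i 1)

/-- The bi-Laplacian Δ² = Δ ∘ Δ. -/
noncomputable def bilap {n : ℕ} (u : EuclideanSpace ℝ (Fin n) → ℝ) :
    EuclideanSpace ℝ (Fin n) → ℝ :=
  lap (lap u)

/-- The pointwise Euclidean norm |U(x)| of a p-map U. -/
noncomputable def vnorm {n p : ℕ} (U : Fin p → EuclideanSpace ℝ (Fin n) → ℝ)
    (x : EuclideanSpace ℝ (Fin n)) : ℝ :=
  Real.sqrt (∑ i, U i x ^ 2)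

abbrev Eu (n : ℕ) := EuclideanSpace ℝ (Fin n)

lemma hasFDerivAt_radial {n : ℕ} (F : ℝ → ℝ) (F1 : ℝ) (z : Eu n)
    (h0 : HasDerivAt F F1 (‖z‖ ^ 2)) :
    HasFDerivAt (fun z : Eu n => F (‖z‖ ^ 2)) (F1 • ((2 : ℕ) • innerSL ℝ z)) z := by
  have h1 := (hasStrictFDerivAt_norm_sq z).hasFDerivAt
  exact h0.comp_hasFDerivAt z h1

lemma fderiv_radial {n : ℕ} (F F1 : ℝ → ℝ) (h0 : ∀ t, 0 ≤ t → HasDerivAt F (F1 t) t)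
    (z : Eu n) (i : Fin n) :
    fderiv ℝ (fun z : Eu n => F (‖z‖ ^ 2)) z (EuclideanSpace.single i 1)
      = 2 * F1 (‖z‖ ^ 2) * z i := by
  rw [(hasFDerivAt_radial F _ z (h0 _ (by positivity))).fderiv]
  simp [EuclideanSpace.inner_single_right]
  ring

lemma lap_radial {n : ℕ} (F F1 F2 : ℝ → ℝ) (h0 : ∀ t, 0 ≤ t → HasDerivAt F (F1 t) t)
    (h1 : ∀ t, 0 ≤ t → HasDerivAt F1 (F2 t) t) (z : Eu n) :
    lap (fun z : Eu n => F (‖z‖ ^ 2)) z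
      = 4 * ‖z‖ ^ 2 * F2 (‖z‖ ^ 2) + 2 * n * F1 (‖z‖ ^ 2) := by
  unfold lap
  have : ∀ i : Fin n, fderiv ℝ (fun y : Eu n => fderiv ℝ (fun z : Eu n => F (‖z‖ ^ 2)) y
      (EuclideanSpace.single i 1)) z (EuclideanSpace.single i 1)
      = 4 * F2 (‖z‖ ^ 2) * (z i) ^ 2 + 2 * F1 (‖z‖ ^ 2) := by
    intro i
    have e : (fun y : Eu n => fderiv ℝ (fun z : Eu n => F (‖z‖ ^ 2)) y
      (EuclideanSpace.single i 1)) = fun y => (2 * F1 (‖y‖ ^ 2)) * y i := by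
      funext y; exact fderiv_radial F F1 h0 y i
    rw [e]
    have ha := (hasFDerivAt_radial F1 _ z (h1 _ (by positivity))).const_mul 2
    have hb : HasFDerivAt (fun y : Eu n => y i) (EuclideanSpace.proj i : Eu n →L[ℝ] ℝ) z :=
      (EuclideanSpace.proj i : Eu n →L[ℝ] ℝ).hasFDerivAt
    rw [(ha.fun_mul hb).fderiv]
    simp [EuclideanSpace.inner_single_right]
    ring
  rw [Finset.sum_congr rfl (fun i _ => this i), Finset.sum_add_distrib, ← Finset.mul_sum,
    ← EuclideanSpace.real_norm_sq_eq]
  simp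
  ring

lemma contDiff_pd {n : ℕ} {k : ℕ} {u : Eu n → ℝ} (hu : ContDiff ℝ (k + 1 : ℕ) u) (v : Eu n) :
    ContDiff ℝ k (fun y => fderiv ℝ u y v) := by
  have := hu.fderiv_right (m := k) (by norm_cast)
  exact this.clm_apply contDiff_const

lemma contDiff_lap {n : ℕ} {k : ℕ} {u : Eu n → ℝ} (hu : ContDiff ℝ (k + 2 : ℕ) u) :
    ContDiff ℝ k (lap u) := by
  unfold lap
  exact ContDiff.sum fun i _ => contDiff_pd (k := k) (contDiff_pd (k := k + 1) hu _) _

lemma hcs_pd {n : ℕ} {u : Eu n → ℝ} (hu : HasCompactSupport u) (v : Eu n) :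
    HasCompactSupport (fun y => fderiv ℝ u y v) := by
  exact hu.fderiv_apply (𝕜 := ℝ) v

lemma hcs_lap {n : ℕ} {u : Eu n → ℝ} (hu : HasCompactSupport u) :
    HasCompactSupport (lap u) := by
  apply HasCompactSupport.intro (hu : IsCompact (tsupport u))
  intro x hx
  unfold lap
  apply Finset.sum_eq_zero
  intro i _
  have : x ∉ tsupport (fun y => fderiv ℝ u y (EuclideanSpace.single i 1)) := fun h =>
    hx (tsupport_fderiv_apply_subset ℝ _ h)
  have h2 : x ∉ tsupport (fun z => fderiv ℝ (fun y => fderiv ℝ u y (EuclideanSpace.single i 1)) z (EuclideanSpace.single i 1)) := fun h =>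
    this (tsupport_fderiv_apply_subset ℝ _ h)
  exact image_eq_zero_of_notMem_tsupport (f := fun z => fderiv ℝ (fun y => fderiv ℝ u y (EuclideanSpace.single i 1)) z (EuclideanSpace.single i 1)) h2

lemma ibp_lap {n : ℕ} {φ v : Eu n → ℝ} (hφ : ContDiff ℝ 2 φ) (hv : ContDiff ℝ 2 v)
    (hc : HasCompactSupport v) : ∫ x, φ x * lap v x = ∫ x, lap φ x * v x := by
  have hφ1 : ∀ w, ContDiff ℝ 1 (fun y => fderiv ℝ φ y w) := fun w => contDiff_pd (k := 1) hφ w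
  have hv1 : ∀ w, ContDiff ℝ 1 (fun y => fderiv ℝ v y w) := fun w => contDiff_pd (k := 1) hv w
  have hφ2 : ∀ w, Continuous (fun z => fderiv ℝ (fun y => fderiv ℝ φ y w) z w) := fun w =>
    (contDiff_pd (k := 0) (hφ1 w) w).continuous
  have hv2 : ∀ w, Continuous (fun z => fderiv ℝ (fun y => fderiv ℝ v y w) z w) := fun w =>
    (contDiff_pd (k := 0) (hv1 w) w).continuous
  have hc1 := fun w => hcs_pd hc w
  have hc2 := fun w => hcs_pd (hc1 w) w
  have I : ∀ {a b : Eu n → ℝ}, Continuous a → Continuous b → HasCompactSupport b →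
      Integrable (fun x => a x * b x) := fun ha hb hcb =>
    (ha.mul hb).integrable_of_hasCompactSupport hcb.mul_left
  have key : ∀ w, ∫ x, φ x * fderiv ℝ (fun y => fderiv ℝ v y w) x w
      = ∫ x, fderiv ℝ (fun y => fderiv ℝ φ y w) x w * v x := by
    intro w
    rw [integral_mul_fderiv_eq_neg_fderiv_mul_of_integrable
      (I (hφ1 w).continuous (hv1 w).continuous (hc1 w))
      (I hφ.continuous (hv2 w) (hc2 w)) (I hφ.continuous (hv1 w).continuous (hc1 w))
      (fun x _ => (hφ.differentiable (by norm_num)).differentiableAt)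
      (fun x _ => ((hv1 w).differentiable (by norm_num)).differentiableAt),
      integral_mul_fderiv_eq_neg_fderiv_mul_of_integrable
      (I (hφ2 w) hv.continuous hc)
      (I (hφ1 w).continuous (hv1 w).continuous (hc1 w))
      (I (hφ1 w).continuous hv.continuous hc)
      (fun x _ => ((hφ1 w).differentiable (by norm_num)).differentiableAt)
      (fun x _ => (hv.differentiable (by norm_num)).differentiableAt), neg_neg]
  unfold lap
  simp_rw [Finset.mul_sum, Finset.sum_mul]
  rw [integral_finsetSum _ (fun i _ => I hφ.continuous (hv2 _) (hc2 _)),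
    integral_finsetSum _ (fun i _ => I (hφ2 _) hv.continuous hc)]
  exact Finset.sum_congr rfl fun i _ => key _

lemma ibp_bilap {n : ℕ} {φ v : Eu n → ℝ} (hφ : ContDiff ℝ 4 φ) (hv : ContDiff ℝ 4 v)
    (hc : HasCompactSupport v) : ∫ x, φ x * bilap v x = ∫ x, bilap φ x * v x := by
  unfold bilap
  rw [ibp_lap (hφ.of_le (by norm_num)) (contDiff_lap (k := 2) hv) (hcs_lap hc),
    ibp_lap (contDiff_lap (k := 2) hφ) (hv.of_le (by norm_num)) hc]

noncomputable def chi (t : ℝ) : ℝ := Real.smoothTransition (2 - 2 * t)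

noncomputable def cj (j : ℕ) : ℝ → ℝ := iteratedDeriv j chi

lemma contDiff_chi {k : ℕ∞} : ContDiff ℝ k chi :=
  Real.smoothTransition.contDiff.comp (by fun_prop)

lemma cj_zero : cj 0 = chi := by simp [cj]

lemma cj_deriv (j : ℕ) (t : ℝ) : HasDerivAt (cj j) (cj (j + 1) t) t := by
  have : Differentiable ℝ (cj j) :=
    (contDiff_chi (k := ⊤)).differentiable_iteratedDeriv j (by exact_mod_cast WithTop.coe_lt_top _)
  have h2 := (this t).hasDerivAt
  simpa [cj, iteratedDeriv_succ] using h2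

lemma cj_cont (j : ℕ) : Continuous (cj j) :=
  continuous_iff_continuousAt.2 fun t => (cj_deriv j t).continuousAt

lemma chi_one {t : ℝ} (ht : t ≤ 1 / 2) : chi t = 1 :=
  Real.smoothTransition.one_of_one_le (by linarith)

lemma chi_zero {t : ℝ} (ht : 1 ≤ t) : chi t = 0 :=
  Real.smoothTransition.zero_of_nonpos (by linarith)

lemma cj_small (j : ℕ) {t : ℝ} (ht : t < 1 / 2) : cj (j + 1) t = 0 := by
  induction j generalizing t with
  | zero =>
    rw [← (cj_deriv 0 t).deriv]
    have : cj 0 =ᶠ[𝓝 t] fun _ => 1 := by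
      filter_upwards [Iio_mem_nhds ht] with y hy
      rw [cj_zero, chi_one (le_of_lt hy)]
    rw [this.deriv_eq]; simp
  | succ j ih =>
    rw [← (cj_deriv (j + 1) t).deriv]
    have : cj (j + 1) =ᶠ[𝓝 t] fun _ => 0 := by
      filter_upwards [Iio_mem_nhds ht] with y hy
      exact ih hy
    rw [this.deriv_eq]; simp

lemma cj_large' (j : ℕ) {t : ℝ} (ht : 1 < t) : cj j t = 0 := by
  induction j generalizing t with
  | zero => rw [cj_zero]; exact chi_zero ht.le
  | succ j ih =>
    rw [← (cj_deriv j t).deriv]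
    have : cj j =ᶠ[𝓝 t] fun _ => 0 := by
      filter_upwards [Ioi_mem_nhds ht] with y hy
      exact ih hy
    rw [this.deriv_eq]; simp

lemma cj_large (j : ℕ) {t : ℝ} (ht : 1 ≤ t) : cj j t = 0 := by
  have h1 : IsClosed {t | cj j t = 0} := isClosed_eq (cj_cont j) continuous_const
  have h2 : Set.Ioi (1 : ℝ) ⊆ {t | cj j t = 0} := fun t ht => cj_large' j ht
  have h3 := closure_minimal h2 h1
  rw [closure_Ioi] at h3
  exact h3 ht

noncomputable def pq (a e t : ℝ) (j : ℕ) : ℝ := (max (t + e) (1 / 4)) ^ (a - j)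

noncomputable def qq (n : ℝ) (a : ℝ) (e t : ℝ) : ℝ :=
  -(16 * t ^ 2 * (cj 4 t * pq a e t 0 + 4 * a * cj 3 t * pq a e t 1
      + 6 * (a * (a - 1)) * cj 2 t * pq a e t 2
      + 4 * (a * (a - 1) * (a - 2)) * cj 1 t * pq a e t 3)
    + 16 * (n + 2) * t * (cj 3 t * pq a e t 0 + 3 * a * cj 2 t * pq a e t 1
      + 3 * (a * (a - 1)) * cj 1 t * pq a e t 2)
    + 4 * n * (n + 2) * (cj 2 t * pq a e t 0 + 2 * a * cj 1 t * pq a e t 1))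

lemma qq_cont (n a : ℝ) : Continuous (fun x : ℝ × ℝ => qq n a x.1 x.2) := by
  have hp : ∀ b : ℝ, Continuous (fun x : ℝ × ℝ => (max (x.2 + x.1) (1 / 4)) ^ b) := by
    intro b
    apply Continuous.rpow_const (by fun_prop)
    intro x; left
    have : (1 / 4 : ℝ) ≤ max (x.2 + x.1) (1 / 4) := le_max_right _ _
    intro h; rw [h] at this; norm_num at this
  have hc : ∀ j, Continuous (fun x : ℝ × ℝ => cj j x.2) := fun j => (cj_cont j).comp continuous_snd
  have := hc 1
  have := hc 2
  have := hc 3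
  have := hc 4
  have := fun j : ℕ => hp (a - j)
  unfold qq pq
  fun_prop

lemma qq_large (n a e : ℝ) {t : ℝ} (ht : 1 ≤ t) : qq n a e t = 0 := by
  simp [qq, cj_large _ ht]

lemma bilap_ker {n : ℕ} (a : ℝ) (ha : (n : ℝ) = 4 - 2 * a) {e : ℝ} (he : 0 < e) (z : Eu n) :
    bilap (fun z : Eu n => chi (‖z‖ ^ 2) * (‖z‖ ^ 2 + e) ^ a) z
      = 16 * (a * (a - 1) * (a - 2) * (a - 3)) * (chi (‖z‖ ^ 2) * (e ^ 2 * (‖z‖ ^ 2 + e) ^ (a - 4)))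
        - qq n a e (‖z‖ ^ 2) := by
  set p : ℕ → ℝ → ℝ := fun j t => (t + e) ^ (a - j) with hp
  have dp : ∀ j t, 0 ≤ t → HasDerivAt (p j) ((a - j) * p (j + 1) t) t := by
    intro j t ht
    have := ((hasDerivAt_id t).add_const e).rpow_const (p := a - j) (Or.inl (by simp; positivity))
    simp only [id, one_mul] at this
    convert this using 1
    simp only [hp]; push_cast; ring_nf
  set F0 : ℝ → ℝ := fun t => cj 0 t * p 0 t with hF0
  set F1 : ℝ → ℝ := fun t => cj 1 t * p 0 t + a * (cj 0 t * p 1 t) with hF1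
  set F2 : ℝ → ℝ := fun t => cj 2 t * p 0 t + 2 * a * (cj 1 t * p 1 t)
    + a * (a - 1) * (cj 0 t * p 2 t) with hF2
  set F3 : ℝ → ℝ := fun t => cj 3 t * p 0 t + 3 * a * (cj 2 t * p 1 t)
    + 3 * (a * (a - 1)) * (cj 1 t * p 2 t)
    + a * (a - 1) * (a - 2) * (cj 0 t * p 3 t) with hF3
  set F4 : ℝ → ℝ := fun t => cj 4 t * p 0 t + 4 * a * (cj 3 t * p 1 t)
    + 6 * (a * (a - 1)) * (cj 2 t * p 2 t)
    + 4 * (a * (a - 1) * (a - 2)) * (cj 1 t * p 3 t)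
    + a * (a - 1) * (a - 2) * (a - 3) * (cj 0 t * p 4 t) with hF4
  have dcp : ∀ i j t, 0 ≤ t → HasDerivAt (fun t => cj i t * p j t)
      (cj (i + 1) t * p j t + cj i t * ((a - j) * p (j + 1) t)) t := fun i j t ht =>
    (cj_deriv i t).mul (dp j t ht)
  have d0 : ∀ t, 0 ≤ t → HasDerivAt F0 (F1 t) t := by
    intro t ht
    refine HasDerivAt.congr_deriv (dcp 0 0 t ht) ?_
    simp only [hF1]; push_cast; ring
  have d1 : ∀ t, 0 ≤ t → HasDerivAt F1 (F2 t) t := by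
    intro t ht
    refine HasDerivAt.congr_deriv ((dcp 1 0 t ht).fun_add ((dcp 0 1 t ht).const_mul a)) ?_
    simp only [hF2]; push_cast; ring
  have d2 : ∀ t, 0 ≤ t → HasDerivAt F2 (F3 t) t := by
    intro t ht
    refine HasDerivAt.congr_deriv (((dcp 2 0 t ht).fun_add ((dcp 1 1 t ht).const_mul (2 * a))).fun_add
      ((dcp 0 2 t ht).const_mul (a * (a - 1)))) ?_
    simp only [hF3]; push_cast; ring
  have d3 : ∀ t, 0 ≤ t → HasDerivAt F3 (F4 t) t := by
    intro t ht
    refine HasDerivAt.congr_deriv ((((dcp 3 0 t ht).fun_add ((dcp 2 1 t ht).const_mul (3 * a))).fun_add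
      ((dcp 1 2 t ht).const_mul (3 * (a * (a - 1))))).fun_add
      ((dcp 0 3 t ht).const_mul (a * (a - 1) * (a - 2)))) ?_
    simp only [hF4]; push_cast; ring
  have e0 : (fun z : Eu n => chi (‖z‖ ^ 2) * (‖z‖ ^ 2 + e) ^ a) = fun z => F0 (‖z‖ ^ 2) := by
    funext z; simp [hF0, hp, cj_zero]
  have l1 : lap (fun z : Eu n => F0 (‖z‖ ^ 2)) = fun z : Eu n =>
      (fun t => 4 * (t * F2 t) + 2 * n * F1 t) (‖z‖ ^ 2) := by
    funext z; rw [lap_radial F0 F1 F2 d0 d1]; ring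
  have g1 : ∀ t, 0 ≤ t → HasDerivAt (fun t => 4 * (t * F2 t) + 2 * n * F1 t)
      ((fun t => 4 * (t * F3 t) + (2 * n + 4) * F2 t) t) t := by
    intro t ht
    refine HasDerivAt.congr_deriv (((((hasDerivAt_id' t).fun_mul (d2 t ht)).const_mul 4).fun_add ((d1 t ht).const_mul (2 * (n : ℝ))))) ?_
    simp; ring
  have g2 : ∀ t, 0 ≤ t → HasDerivAt (fun t => 4 * (t * F3 t) + (2 * n + 4) * F2 t)
      ((fun t => 4 * (t * F4 t) + (2 * n + 8) * F3 t) t) t := by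
    intro t ht
    refine HasDerivAt.congr_deriv (((((hasDerivAt_id' t).fun_mul (d3 t ht)).const_mul 4).fun_add
      ((d2 t ht).const_mul (2 * (n : ℝ) + 4)))) ?_
    simp; ring
  unfold bilap
  rw [e0, l1, lap_radial _ _ _ g1 g2]
  have ht0 : 0 ≤ ‖z‖ ^ 2 := by positivity
  generalize ‖z‖ ^ 2 = t at *
  have hT : 0 < t + e := by positivity
  have r2 : p 2 t = (t + e) ^ 2 * (t + e) ^ (a - 4) := by
    simp only [hp]
    rw [← Real.rpow_natCast, ← Real.rpow_add hT]; congr 1; push_cast; ring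
  have r3 : p 3 t = (t + e) * (t + e) ^ (a - 4) := by
    simp only [hp]
    nth_rewrite 2 [← Real.rpow_one (t + e)]
    rw [← Real.rpow_add hT]; congr 1; push_cast; ring
  have r4 : p 4 t = (t + e) ^ (a - 4) := by
    simp only [hp]; norm_num
  have hmax : 1 / 4 ≤ t + e → qq n a e t = -(16 * t ^ 2 * (cj 4 t * p 0 t + 4 * a * cj 3 t * p 1 t + 6 * (a * (a - 1)) * cj 2 t * p 2 t
      + 4 * (a * (a - 1) * (a - 2)) * cj 1 t * p 3 t)
    + 16 * (n + 2) * t * (cj 3 t * p 0 t + 3 * a * cj 2 t * p 1 t + 3 * (a * (a - 1)) * cj 1 t * p 2 t)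
    + 4 * n * (n + 2) * (cj 2 t * p 0 t + 2 * a * cj 1 t * p 1 t)) := by
    intro h
    simp only [qq, pq, hp, max_eq_left h]
  have hq : qq n a e t = -(16 * t ^ 2 * (cj 4 t * p 0 t + 4 * a * cj 3 t * p 1 t + 6 * (a * (a - 1)) * cj 2 t * p 2 t
      + 4 * (a * (a - 1) * (a - 2)) * cj 1 t * p 3 t)
    + 16 * (n + 2) * t * (cj 3 t * p 0 t + 3 * a * cj 2 t * p 1 t + 3 * (a * (a - 1)) * cj 1 t * p 2 t)
    + 4 * n * (n + 2) * (cj 2 t * p 0 t + 2 * a * cj 1 t * p 1 t)) := by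
    by_cases h : t < 1 / 2
    · simp [qq, cj_small 0 h, cj_small 1 h, cj_small 2 h, cj_small 3 h]
    · exact hmax (by linarith)
  rw [hq]
  simp only [hF1, hF2, hF3, hF4, ← cj_zero]
  rw [r2, r3, r4, ha]
  ring

lemma kint {n m : ℕ} (hn : n = m + 4) (r : ℝ) :
    IntegrableOn (fun z : Eu n => (‖z‖ ^ m)⁻¹) (ball 0 r) := by
  apply integrableOn_ball_of_norm_le_rpow (C := 1) (α := m)
  case hd => simp; omega
  case hα => simp [hn]
  case h_meas => exact Measurable.aestronglyMeasurable (by fun_prop)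
  case h_decay =>
    refine Eventually.of_forall fun x => ?_
    rw [Real.rpow_neg (norm_nonneg _), Real.rpow_natCast, one_mul, Real.norm_of_nonneg (by positivity)]

noncomputable def EE {n : ℕ} (m : ℕ) (z : Eu n) : ℝ := chi (‖z‖ ^ 2) * (‖z‖ ^ m)⁻¹

lemma chi_nonneg (t : ℝ) : 0 ≤ chi t := Real.smoothTransition.nonneg _
lemma chi_le (t : ℝ) : chi t ≤ 1 := Real.smoothTransition.le_one _

lemma EE_nonneg {n : ℕ} (m : ℕ) (z : Eu n) : 0 ≤ EE m z :=
  mul_nonneg (chi_nonneg _) (by positivity)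

lemma EE_large {n : ℕ} (m : ℕ) {z : Eu n} (hz : 1 ≤ ‖z‖) : EE m z = 0 := by
  rw [EE, chi_zero, zero_mul]; nlinarith

lemma EE_meas {n : ℕ} (m : ℕ) : Measurable (EE m : Eu n → ℝ) := by
  have : Continuous chi := contDiff_chi (k := 0) |>.continuous
  unfold EE
  have h2 : Measurable (fun z : Eu n => chi (‖z‖ ^ 2)) := by fun_prop
  fun_prop

lemma EE_int {n m : ℕ} (hn : n = m + 4) : Integrable (EE m : Eu n → ℝ) := by
  have h1 : IntegrableOn (EE m : Eu n → ℝ) (ball 0 1) := by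
    refine (kint hn 1).mono' (EE_meas m).aestronglyMeasurable ?_
    refine Eventually.of_forall fun z => ?_
    rw [Real.norm_of_nonneg (EE_nonneg _ _), EE]
    exact mul_le_of_le_one_left (by positivity) (chi_le _)
  rw [integrableOn_iff_integrable_of_support_subset] at h1
  · exact h1
  · intro z hz
    by_contra h
    simp only [mem_ball, dist_zero_right, not_lt] at h
    exact hz (EE_large m h)

lemma ker_lim {n m : ℕ} (hn : n = m + 4) {v : Eu n → ℝ} (hv : Continuous v)
    (hc : HasCompactSupport v) :
    Tendsto (fun c : ℝ => ∫ z : Eu n, chi (‖z‖ ^ 2) * (‖z‖ ^ 2 + (c ^ 2)⁻¹) ^ (-(m : ℝ) / 2) * v z) atTop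
      (𝓝 (∫ z : Eu n, EE m z * v z)) := by
  have : Nonempty (Fin n) := ⟨⟨0, by omega⟩⟩
  have : Nontrivial (Eu n) := inferInstance
  obtain ⟨B, hB⟩ := hv.bounded_above_of_compact_support hc
  have hchi : Continuous chi := contDiff_chi (k := 0) |>.continuous
  have key : ∀ z : Eu n, z ≠ 0 → (‖z‖ ^ m)⁻¹ = (‖z‖ ^ 2) ^ (-(m : ℝ) / 2) := by
    intro z hz
    rw [← Real.rpow_natCast ‖z‖ 2, ← Real.rpow_mul (norm_nonneg _), ← Real.rpow_natCast,
      ← Real.rpow_neg (norm_nonneg _)]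
    congr 1; push_cast; ring
  refine tendsto_integral_filter_of_dominated_convergence (fun z => EE m z * B) ?_ ?_ ?_ ?_
  · refine Eventually.of_forall fun c => ?_
    have h2 : Measurable (fun z : Eu n => chi (‖z‖ ^ 2)) := by fun_prop
    have h3 := hv.measurable
    exact Measurable.aestronglyMeasurable (by fun_prop)
  · filter_upwards [eventually_gt_atTop 0] with c hc0
    have hae : ∀ᵐ z : Eu n, z ≠ 0 := Measure.ae_ne volume 0
    filter_upwards [hae] with z hz
    rw [norm_mul, Real.norm_of_nonneg (mul_nonneg (chi_nonneg _) (by positivity)), EE]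
    have hz' : 0 < ‖z‖ ^ 2 := by positivity
    refine mul_le_mul (mul_le_mul_of_nonneg_left ?_ (chi_nonneg _)) (hB z) (norm_nonneg _)
      (mul_nonneg (chi_nonneg _) (by positivity))
    rw [key z hz]
    have : (0 : ℝ) < (c ^ 2)⁻¹ := by positivity
    apply Real.rpow_le_rpow_of_nonpos hz' (by linarith)
    have : (0 : ℝ) ≤ m := by positivity
    linarith
  · exact (EE_int hn).mul_const B
  · have hae : ∀ᵐ z : Eu n, z ≠ 0 := Measure.ae_ne volume 0
    filter_upwards [hae] with z hz
    rw [EE, key z hz]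
    have hz' : 0 < ‖z‖ ^ 2 := by positivity
    have h1 : Tendsto (fun c : ℝ => ‖z‖ ^ 2 + (c ^ 2)⁻¹) atTop (𝓝 (‖z‖ ^ 2 + 0)) :=
      tendsto_const_nhds.add (tendsto_inv_atTop_zero.comp (tendsto_pow_atTop two_ne_zero))
    rw [add_zero] at h1
    exact ((h1.rpow_const (Or.inl hz'.ne')).const_mul _).mul_const _

noncomputable def NN (n m : ℕ) : ℝ := ∫ x : Eu n, ((1 : ℝ) + ‖x‖ ^ 2) ^ (-((m : ℝ) + 8) / 2)

lemma NN_int {n m : ℕ} (hn : n = m + 4) :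
    Integrable (fun x : Eu n => ((1 : ℝ) + ‖x‖ ^ 2) ^ (-((m : ℝ) + 8) / 2)) := by
  apply integrable_rpow_neg_one_add_norm_sq
  simp; rw [hn]; push_cast; linarith

lemma NN_pos {n m : ℕ} (hn : n = m + 4) : 0 < NN n m := by
  unfold NN
  have hp : ∀ x : Eu n, 0 < ((1 : ℝ) + ‖x‖ ^ 2) ^ (-((m : ℝ) + 8) / 2) := fun x => by positivity
  rw [integral_pos_iff_support_of_nonneg (fun x => (hp x).le) (NN_int hn)]
  have : Function.support (fun x : Eu n => ((1 : ℝ) + ‖x‖ ^ 2) ^ (-((m : ℝ) + 8) / 2)) = Set.univ := by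
    ext x; simp only [Function.mem_support, Set.mem_univ, iff_true]; exact (hp x).ne'
  rw [this]
  exact isOpen_univ.measure_pos _ Set.univ_nonempty

lemma delta_lim {n m : ℕ} (hn : n = m + 4) {v : Eu n → ℝ} (hv : Continuous v)
    (hc : HasCompactSupport v) :
    Tendsto (fun c : ℝ => ∫ z : Eu n, chi (‖z‖ ^ 2) * (((c ^ 2)⁻¹) ^ 2 *
      (‖z‖ ^ 2 + (c ^ 2)⁻¹) ^ (-(m : ℝ) / 2 - 4)) * v z) atTop
      (𝓝 (NN n m * v 0)) := by
  have hchi : Continuous chi := contDiff_chi (k := 0) |>.continuous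
  have hN := NN_pos hn
  have hfr : Module.finrank ℝ (Eu n) = n := by simp
  have := tendsto_integral_comp_smul_smul_of_integrable (μ := (volume : Measure (Eu n)))
    (φ := fun x : Eu n => (NN n m)⁻¹ * ((1 : ℝ) + ‖x‖ ^ 2) ^ (-((m : ℝ) + 8) / 2))
    (fun x => by positivity) (by rw [integral_const_mul]; exact inv_mul_cancel₀ hN.ne') ?_
    (g := fun z => chi (‖z‖ ^ 2) * v z) ?_ ?_
  · have h2 := this.const_mul (NN n m)
    simp only [norm_zero, ne_eq, OfNat.ofNat_ne_zero, not_false_eq_true, zero_pow] at h2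
    rw [chi_one (by norm_num), one_mul] at h2
    refine h2.congr' ?_
    filter_upwards [eventually_gt_atTop 0] with c hc0
    rw [← integral_const_mul]
    congr 1
    funext z
    rw [hfr, norm_smul, Real.norm_of_nonneg hc0.le, smul_eq_mul]
    have e1 : (1 : ℝ) + (c * ‖z‖) ^ 2 = c ^ 2 * (‖z‖ ^ 2 + (c ^ 2)⁻¹) := by
      field_simp; ring
    have e2 : (c ^ 2 : ℝ) ^ (-((m : ℝ) + 8) / 2) = (c ^ (m + 8))⁻¹ := by
      rw [← Real.rpow_natCast c 2, ← Real.rpow_mul hc0.le, ← Real.rpow_natCast,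
        ← Real.rpow_neg hc0.le]
      congr 1; push_cast; ring
    rw [e1, Real.mul_rpow (by positivity) (by positivity), e2,
      show -((m : ℝ) + 8) / 2 = -(m : ℝ) / 2 - 4 by ring, show c ^ n = c ^ (m + 4) by rw [hn]]
    field_simp
    try ring
  · rw [hfr]
    have h1 : Tendsto (fun x : Eu n => (NN n m)⁻¹ * ‖x‖⁻¹) (Bornology.cobounded (Eu n)) (𝓝 0) := by
      have := (tendsto_inv_atTop_zero.comp (tendsto_norm_cobounded_atTop (E := Eu n))).const_mul (NN n m)⁻¹
      simpa using this
    refine squeeze_zero' (Eventually.of_forall fun x => by positivity) ?_ h1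
    filter_upwards [tendsto_norm_cobounded_atTop.eventually (eventually_ge_atTop (1 : ℝ))] with x hx
    have hx0 : 0 < ‖x‖ := by linarith
    have e2 : (‖x‖ ^ 2 : ℝ) ^ (-((m : ℝ) + 8) / 2) = (‖x‖ ^ (m + 8))⁻¹ := by
      rw [← Real.rpow_natCast ‖x‖ 2, ← Real.rpow_mul hx0.le, ← Real.rpow_natCast,
        ← Real.rpow_neg hx0.le]
      congr 1; push_cast; ring
    have e3 : ((1 : ℝ) + ‖x‖ ^ 2) ^ (-((m : ℝ) + 8) / 2) ≤ (‖x‖ ^ (m + 8))⁻¹ := by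
      rw [← e2]
      apply Real.rpow_le_rpow_of_nonpos (by positivity) (by linarith)
      have : (0 : ℝ) ≤ m := by positivity
      linarith
    calc ‖x‖ ^ n * ((NN n m)⁻¹ * ((1 : ℝ) + ‖x‖ ^ 2) ^ (-((m : ℝ) + 8) / 2))
        ≤ ‖x‖ ^ n * ((NN n m)⁻¹ * (‖x‖ ^ (m + 8))⁻¹) := by gcongr
      _ = (NN n m)⁻¹ * (‖x‖ ^ 4)⁻¹ := by
        rw [show ‖x‖ ^ n = ‖x‖ ^ (m + 4) by congr 1]; field_simp; try ring
      _ ≤ (NN n m)⁻¹ * ‖x‖⁻¹ := by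
        gcongr
        exact le_self_pow₀ hx (by norm_num)
  · exact Continuous.integrable_of_hasCompactSupport (by fun_prop) hc.mul_left
  · exact Continuous.continuousAt (by fun_prop)

noncomputable def gg {n : ℕ} (m : ℕ) (z : Eu n) : ℝ := qq n (-(m : ℝ) / 2) 0 (‖z‖ ^ 2)

lemma gg_cont {n : ℕ} (m : ℕ) : Continuous (gg m : Eu n → ℝ) := by
  have := qq_cont n (-(m : ℝ) / 2)
  exact this.comp (by fun_prop : Continuous fun z : Eu n => ((0 : ℝ), ‖z‖ ^ 2))

lemma gg_large {n : ℕ} (m : ℕ) {z : Eu n} (hz : 1 ≤ ‖z‖) : gg m z = 0 :=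
  qq_large _ _ _ (by nlinarith)

lemma q_lim {n : ℕ} (m : ℕ) {v : Eu n → ℝ} (hv : Continuous v)
    (hc : HasCompactSupport v) :
    Tendsto (fun c : ℝ => ∫ z : Eu n, qq n (-(m : ℝ) / 2) ((c ^ 2)⁻¹) (‖z‖ ^ 2) * v z) atTop
      (𝓝 (∫ z : Eu n, gg m z * v z)) := by
  have hq := qq_cont n (-(m : ℝ) / 2)
  have hK : IsCompact (Set.Icc (0 : ℝ) 1 ×ˢ Set.Icc (0 : ℝ) 1) := isCompact_Icc.prod isCompact_Icc
  obtain ⟨C, hC⟩ := hK.exists_bound_of_continuousOn hq.continuousOn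
  have hC0 : 0 ≤ C := (norm_nonneg _).trans (hC (0, 0) (by simp))
  have hb : ∀ e ∈ Set.Icc (0 : ℝ) 1, ∀ z : Eu n, ‖qq n (-(m : ℝ) / 2) e (‖z‖ ^ 2)‖ ≤ C := by
    intro e he z
    by_cases h : ‖z‖ ^ 2 ≤ 1
    · exact hC (e, ‖z‖ ^ 2) ⟨he, by positivity, h⟩
    · rw [qq_large _ _ _ (by linarith)]; simpa using hC0
  have h0 : Tendsto (fun c : ℝ => (c ^ 2)⁻¹) atTop (𝓝 0) :=
    tendsto_inv_atTop_zero.comp (tendsto_pow_atTop two_ne_zero)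
  refine tendsto_integral_filter_of_dominated_convergence (fun z => C * ‖v z‖) ?_ ?_ ?_ ?_
  · refine Eventually.of_forall fun c => ?_
    have : Continuous fun z : Eu n => qq n (-(m : ℝ) / 2) ((c ^ 2)⁻¹) (‖z‖ ^ 2) :=
      hq.comp (by fun_prop : Continuous fun z : Eu n => ((c ^ 2)⁻¹, ‖z‖ ^ 2))
    exact (this.mul hv).aestronglyMeasurable
  · filter_upwards [eventually_ge_atTop 1] with c hc1
    refine Eventually.of_forall fun z => ?_
    rw [norm_mul]
    gcongr
    refine hb _ ⟨by positivity, ?_⟩ z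
    exact inv_le_one_of_one_le₀ (by nlinarith)
  · exact ((hv.norm).integrable_of_hasCompactSupport hc.norm).const_mul C
  · refine Eventually.of_forall fun z => ?_
    have h1 : Tendsto (fun c : ℝ => (((c ^ 2)⁻¹, ‖z‖ ^ 2) : ℝ × ℝ)) atTop (𝓝 (0, ‖z‖ ^ 2)) :=
      h0.prodMk_nhds tendsto_const_nhds
    exact (((hq.tendsto _).comp h1)).mul_const _

noncomputable def kap (n m : ℕ) : ℝ := (m : ℝ) * (m + 2) * (m + 4) * (m + 6) * NN n m

lemma kap_pos {n m : ℕ} (hn : n = m + 4) (hm : 1 ≤ m) : 0 < kap n m := by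
  have := NN_pos hn
  have : (0 : ℝ) < m := by exact_mod_cast hm
  unfold kap; positivity

lemma rep_compact {n m : ℕ} (hn : n = m + 4) {v : Eu n → ℝ} (hv : ContDiff ℝ 4 v)
    (hc : HasCompactSupport v) :
    kap n m * v 0 = (∫ z : Eu n, EE m z * bilap v z) + ∫ z : Eu n, gg m z * v z := by
  have hchi : ContDiff ℝ 4 chi := contDiff_chi (k := 4)
  set a : ℝ := -(m : ℝ) / 2 with ha
  have hbl : Continuous (bilap v) := (contDiff_lap (k := 0) (contDiff_lap (k := 2) hv)).continuous
  have hbc : HasCompactSupport (bilap v) := hcs_lap (hcs_lap hc)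
  have L1 := ker_lim hn hbl hbc
  have L2 := (delta_lim hn hv.continuous hc).const_mul ((m : ℝ) * (m + 2) * (m + 4) * (m + 6))
  have L3 := q_lim m hv.continuous hc
  have L4 := L2.sub L3
  have key : ∀ᶠ c : ℝ in atTop, (m : ℝ) * (m + 2) * (m + 4) * (m + 6) * (∫ z : Eu n, chi (‖z‖ ^ 2) * (((c ^ 2)⁻¹) ^ 2 *
      (‖z‖ ^ 2 + (c ^ 2)⁻¹) ^ (-(m : ℝ) / 2 - 4)) * v z) - (∫ z : Eu n, qq n (-(m : ℝ) / 2) ((c ^ 2)⁻¹) (‖z‖ ^ 2) * v z)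
      = ∫ z : Eu n, chi (‖z‖ ^ 2) * (‖z‖ ^ 2 + (c ^ 2)⁻¹) ^ (-(m : ℝ) / 2) * bilap v z := by
    filter_upwards [eventually_gt_atTop 0] with c hc0
    have he : (0 : ℝ) < (c ^ 2)⁻¹ := by positivity
    set e := (c ^ 2)⁻¹
    have hpw : ∀ b : ℝ, ContDiff ℝ 4 (fun z : Eu n => (‖z‖ ^ 2 + e) ^ b) := fun b => by
      apply ContDiff.rpow_const_of_ne
      · exact (contDiff_norm_sq ℝ).add contDiff_const
      · intro x; positivity
    have hcs : ContDiff ℝ 4 (fun z : Eu n => chi (‖z‖ ^ 2)) := hchi.comp (contDiff_norm_sq ℝ)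
    rw [ibp_bilap (hcs.mul (hpw _)) hv hc, ← integral_const_mul, ← integral_sub]
    · congr 1
      funext z
      have hb := bilap_ker (n := n) a (by rw [ha, hn]; push_cast; ring) he z
      change _ = bilap (fun z : Eu n => chi (‖z‖ ^ 2) * (‖z‖ ^ 2 + e) ^ a) z * v z
      rw [hb, ha]
      ring
    · apply Integrable.const_mul
      exact (((hcs.continuous.mul (continuous_const.mul (hpw _).continuous)).mul
        hv.continuous)).integrable_of_hasCompactSupport hc.mul_left
    · have : Continuous fun z : Eu n => qq n (-(m : ℝ) / 2) e (‖z‖ ^ 2) :=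
        (qq_cont n (-(m : ℝ) / 2)).comp (by fun_prop : Continuous fun z : Eu n => (e, ‖z‖ ^ 2))
      exact (this.mul hv.continuous).integrable_of_hasCompactSupport hc.mul_left
  have := tendsto_nhds_unique (L4.congr' key) L1
  rw [kap, ← this]; ring

lemma lap_congr {n : ℕ} {u v : Eu n → ℝ} {x : Eu n} (h : u =ᶠ[𝓝 x] v) : lap u =ᶠ[𝓝 x] lap v := by
  have h1 : ∀ i : Fin n, (fun y => fderiv ℝ u y (EuclideanSpace.single i 1)) =ᶠ[𝓝 x]
      (fun y => fderiv ℝ v y (EuclideanSpace.single i 1)) := fun i =>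
    (h.fderiv (𝕜 := ℝ)).mono fun y hy => by simp only [hy]
  have h2 : ∀ i : Fin n, ∀ᶠ z in 𝓝 x, fderiv ℝ (fun y => fderiv ℝ u y (EuclideanSpace.single i 1)) z (EuclideanSpace.single i 1) =
      fderiv ℝ (fun y => fderiv ℝ v y (EuclideanSpace.single i 1)) z (EuclideanSpace.single i 1) := fun i =>
    ((h1 i).fderiv (𝕜 := ℝ)).mono fun y hy => by simp only [hy]
  filter_upwards [eventually_all.2 h2] with z hz
  exact Finset.sum_congr rfl fun i _ => hz i

theorem rep {n m : ℕ} (hn : n = m + 4) {w : Eu n → ℝ} {r : ℝ} (hr : 1 < r)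
    (hw : ContDiffOn ℝ 4 w (ball 0 r)) :
    kap n m * w 0 = (∫ z : Eu n, EE m z * bilap w z) + ∫ z : Eu n, gg m z * w z := by
  let ζ : ContDiffBump (0 : Eu n) := ⟨(2 + r) / 3, (1 + 2 * r) / 3, by linarith, by linarith⟩
  set v : Eu n → ℝ := fun z => ζ z * w z with hvdef
  have hv : ContDiff ℝ 4 v := by
    rw [contDiff_iff_contDiffAt]
    intro x
    by_cases hx : x ∈ ball (0 : Eu n) r
    · exact ζ.contDiff.contDiffAt.mul (hw.contDiffAt (isOpen_ball.mem_nhds hx))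
    · have hx' : x ∉ tsupport ζ := by
        rw [ζ.tsupport_eq]
        simp only [mem_ball, dist_zero_right, mem_closedBall, not_lt, not_le] at hx ⊢
        change (1 + 2 * r) / 3 < _
        linarith
      have : v =ᶠ[𝓝 x] fun _ => 0 := by
        filter_upwards [notMem_tsupport_iff_eventuallyEq.1 hx'] with y hy
        simp [hvdef, hy]
      exact contDiffAt_const.congr_of_eventuallyEq this
  have hc : HasCompactSupport v := ζ.hasCompactSupport.mul_right
  have hev : ∀ z : Eu n, ‖z‖ ≤ 1 → v =ᶠ[𝓝 z] w := by
    intro z hz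
    have : ball (0 : Eu n) ((2 + r) / 3) ∈ 𝓝 z := isOpen_ball.mem_nhds (by simp; linarith)
    filter_upwards [this] with y hy
    simp only [hvdef]
    rw [ζ.one_of_mem_closedBall (ball_subset_closedBall hy), one_mul]
  have h := rep_compact hn hv hc
  rw [(hev 0 (by simp)).eq_of_nhds] at h
  rw [h]
  congr 1
  · congr 1; funext z
    by_cases hz : 1 ≤ ‖z‖
    · simp [EE_large m hz]
    · rw [show bilap v z = bilap w z from (lap_congr (lap_congr (hev z (by linarith)))).eq_of_nhds]
  · congr 1; funext z
    by_cases hz : 1 ≤ ‖z‖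
    · simp [gg_large m hz]
    · rw [(hev z (by linarith)).eq_of_nhds]

lemma lap_scale {n : ℕ} (u : Eu n → ℝ) (b l : ℝ) (a x : Eu n) :
    lap (fun y => b * u (a + l • y)) x = b * l ^ 2 * lap u (a + l • x) := by
  have h : ∀ (f : Eu n → ℝ) (c : ℝ) (y v : Eu n), fderiv ℝ (fun y => c * f (a + l • y)) y v
      = c * l * fderiv ℝ f (a + l • y) v := by
    intro f c y v
    have e1 : (fun y => c * f (a + l • y)) = c • fun y => (fun z => f (a + z)) (l • y) := by
      ext y; simp
    rw [e1, fderiv_const_smul_field, Pi.smul_apply, fderiv_comp_smul (𝕜 := ℝ) (f := fun z => f (a + z)) (c := l) (x := y), fderiv_comp_add_left]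
    simp [mul_assoc]
  unfold lap
  rw [Finset.mul_sum]
  refine Finset.sum_congr rfl fun i _ => ?_
  simp_rw [h u b]
  rw [h (fun z => fderiv ℝ u z (EuclideanSpace.single i 1)) (b * l)]
  ring

lemma bilap_scale {n : ℕ} (u : Eu n → ℝ) (b l : ℝ) (a x : Eu n) :
    bilap (fun y => b * u (a + l • y)) x = b * l ^ 4 * bilap u (a + l • x) := by
  unfold bilap
  have : lap (fun y => b * u (a + l • y)) = fun y => (b * l ^ 2) * lap u (a + l • y) := by
    ext y; exact lap_scale u b l a y
  rw [this, lap_scale]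
  ring

lemma vnorm_nonneg {n p : ℕ} (U : Fin p → Eu n → ℝ) (x : Eu n) : 0 ≤ vnorm U x := Real.sqrt_nonneg _

lemma vnorm_scale {n p : ℕ} (U : Fin p → Eu n → ℝ) {b : ℝ} (hb : 0 ≤ b) (l : ℝ) (a x : Eu n) :
    vnorm (fun i y => b * U i (a + l • y)) x = b * vnorm U (a + l • x) := by
  unfold vnorm
  simp_rw [mul_pow]
  rw [← Finset.mul_sum, Real.sqrt_mul (by positivity), Real.sqrt_sq hb]

def Sol {n p : ℕ} (s : ℝ) (V : Fin p → Eu n → ℝ) (r : ℝ) : Prop :=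
  (∀ i, ∀ x ∈ ball (0 : Eu n) r, 0 ≤ V i x) ∧ (∀ i, ContDiffOn ℝ 4 (V i) (ball (0 : Eu n) r)) ∧
  ∀ i, ∀ x ∈ ball (0 : Eu n) r, bilap (V i) x = vnorm V x ^ (s - 1) * V i x

lemma blow {n p : ℕ} {s : ℝ} (hs : 1 < s) {U : Fin p → Eu n → ℝ} (hU : Sol s U 1)
    (hg : ∀ i, ∃ g : Eu n → ℝ, ContinuousOn g (closedBall (0 : Eu n) 1) ∧
          ∀ x ∈ ball (0 : Eu n) 1, g x = U i x) {x0 : Eu n} (hx0 : x0 ∈ ball (0 : Eu n) 1)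
    {R : ℝ} (hR : 0 < R)
    (hK : (2 * R) ^ (4 / (s - 1)) ≤ vnorm U x0 * (1 - ‖x0‖) ^ (4 / (s - 1))) :
    ∃ V : Fin p → Eu n → ℝ, Sol s V R ∧ (∀ x ∈ ball (0 : Eu n) R, vnorm V x ≤ 2 ^ (4 / (s - 1))) ∧
      vnorm V 0 = 1 := by
  choose g hgc hge using hg
  set γ := 4 / (s - 1) with hγ
  have hs' : 0 < s - 1 := by linarith
  have hγ0 : 0 < γ := by positivity
  have hγs : γ * (s - 1) = 4 := by rw [hγ]; field_simp
  have hvg : ∀ x ∈ ball (0 : Eu n) 1, vnorm g x = vnorm U x := by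
    intro x hx
    unfold vnorm
    congr 1
    exact Finset.sum_congr rfl fun i _ => by rw [hge i x hx]
  have hcont : ContinuousOn (fun x => vnorm g x * (1 - ‖x‖) ^ γ) (closedBall (0 : Eu n) 1) := by
    refine ContinuousOn.mul ?_ ?_
    · unfold vnorm
      refine ContinuousOn.sqrt ?_
      exact continuousOn_finsetSum _ fun i _ => (hgc i).pow 2
    · refine ContinuousOn.rpow_const (by fun_prop) fun x _ => Or.inr hγ0.le
  obtain ⟨a, ha, hamax⟩ := (isCompact_closedBall (0 : Eu n) 1).exists_isMaxOn ⟨0, by simp⟩ hcont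
  have hle : ∀ x ∈ ball (0 : Eu n) 1, vnorm U x * (1 - ‖x‖) ^ γ ≤ vnorm g a * (1 - ‖a‖) ^ γ := by
    intro x hx
    rw [← hvg x hx]
    exact hamax (ball_subset_closedBall hx)
  have hpos : 0 < vnorm g a * (1 - ‖a‖) ^ γ := by
    refine lt_of_lt_of_le ?_ (hK.trans (hle x0 hx0))
    positivity
  have ha1 : a ∈ ball (0 : Eu n) 1 := by
    simp only [mem_closedBall, mem_ball, dist_zero_right] at ha ⊢
    refine lt_of_le_of_ne ha fun h => ?_
    rw [h, sub_self, Real.zero_rpow hγ0.ne', mul_zero] at hpos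
    exact lt_irrefl _ hpos
  rw [hvg a ha1] at hpos hle
  have hd : 0 < 1 - ‖a‖ := by simpa using ha1
  set d := 1 - ‖a‖ with hdd
  set A := vnorm U a with hA
  have hA0 : 0 < A := by
    have : 0 < d ^ γ := by positivity
    exact pos_of_mul_pos_left hpos this.le
  set l := A ^ (-1 / γ) with hl
  have hl0 : 0 < l := by positivity
  have hlγ : l ^ γ = A⁻¹ := by
    rw [hl, ← Real.rpow_mul hA0.le, div_mul_cancel₀ _ hγ0.ne', Real.rpow_neg_one]
  have hlR : 2 * R * l ≤ d := by
    rw [← Real.rpow_le_rpow_iff (by positivity) hd.le hγ0, Real.mul_rpow (by positivity) hl0.le, hlγ]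
    rw [← div_eq_mul_inv, div_le_iff₀ hA0, mul_comm (d ^ γ)]
    exact hK.trans (hle x0 hx0)
  have hin : ∀ y ∈ ball (0 : Eu n) R, ‖a + l • y‖ < ‖a‖ + d / 2 := by
    intro y hy
    rw [mem_ball, dist_zero_right] at hy
    calc ‖a + l • y‖ ≤ ‖a‖ + ‖l • y‖ := norm_add_le _ _
      _ = ‖a‖ + l * ‖y‖ := by rw [norm_smul, Real.norm_of_nonneg hl0.le]
      _ < ‖a‖ + l * R := by gcongr
      _ ≤ _ := by nlinarith
  have hin1 : ∀ y ∈ ball (0 : Eu n) R, a + l • y ∈ ball (0 : Eu n) 1 := by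
    intro y hy
    rw [mem_ball, dist_zero_right]
    have := hin y hy
    linarith
  have hb : 0 ≤ l ^ γ := by positivity
  refine ⟨fun i y => l ^ γ * U i (a + l • y), ⟨?_, ?_, ?_⟩, ?_, ?_⟩
  · intro i x hx
    exact mul_nonneg hb (hU.1 i _ (hin1 x hx))
  · intro i
    refine contDiffOn_const.mul ?_
    refine (hU.2.1 i).comp (by fun_prop) ?_
    exact hin1
  · intro i x hx
    rw [bilap_scale, vnorm_scale U hb, hU.2.2 i _ (hin1 x hx),
      Real.mul_rpow hb (vnorm_nonneg _ _), ← Real.rpow_mul hl0.le, hγs]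
    norm_num
    ring
  · intro x hx
    rw [vnorm_scale U hb, hlγ, inv_mul_le_iff₀ hA0]
    have h1 := hle _ (hin1 x hx)
    have h2 := hin x hx
    have h3 : (d / 2) ^ γ ≤ (1 - ‖a + l • x‖) ^ γ :=
      Real.rpow_le_rpow (by positivity) (by linarith) hγ0.le
    have h4 : vnorm U (a + l • x) * (d / 2) ^ γ ≤ A * d ^ γ :=
      (mul_le_mul_of_nonneg_left h3 (vnorm_nonneg _ _)).trans h1
    rw [Real.div_rpow hd.le (by norm_num), mul_div_assoc', div_le_iff₀ (by positivity)] at h4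
    have h5 : 0 < d ^ γ := by positivity
    nlinarith
  · rw [vnorm_scale U hb, hlγ, smul_zero, add_zero]
    exact inv_mul_cancel₀ hA0.ne'

lemma trans_L1 {n : ℕ} {f : Eu n → ℝ} (hf : Integrable f) :
    Tendsto (fun h => ∫ z, |f (z + h) - f z|) (𝓝 0) (𝓝 0) := by
  have mp : ∀ h : Eu n, MeasurePreserving (⇑(⟨fun z => z + h, by fun_prop⟩ : C(Eu n, Eu n))) volume volume :=
    fun h => measurePreserving_add_right volume h
  let F : Lp ℝ 1 (volume : Measure (Eu n)) := hf.toL1 f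
  have hF : F =ᵐ[volume] f := hf.coeFn_toL1
  let g : C(Eu n, C(Eu n, Eu n)) := (⟨fun a : Eu n × Eu n => a.2 + a.1, by fun_prop⟩ : C(Eu n × Eu n, Eu n)).curry
  have hc : Continuous fun h : Eu n => Lp.compMeasurePreserving (g h) (mp h) F :=
    Continuous.compMeasurePreservingLp continuous_const g.continuous mp (by simp)
  have h0 : Tendsto (fun h : Eu n => ‖Lp.compMeasurePreserving (g h) (mp h) F -
      Lp.compMeasurePreserving (g 0) (mp 0) F‖) (𝓝 0) (𝓝 0) := by
    have := (hc.sub (continuous_const (y := Lp.compMeasurePreserving (g 0) (mp 0) F))).norm.tendsto 0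
    simpa using this
  refine h0.congr fun h => ?_
  rw [L1.norm_eq_integral_norm]
  refine integral_congr_ae ?_
  filter_upwards [Lp.coeFn_sub (Lp.compMeasurePreserving (g h) (mp h) F)
      (Lp.compMeasurePreserving (g 0) (mp 0) F),
    Lp.coeFn_compMeasurePreserving F (mp h), Lp.coeFn_compMeasurePreserving F (mp 0), hF,
    (mp h).quasiMeasurePreserving.ae_eq_comp hF] with z h1 h2 h3 h4 h5
  rw [h1, Pi.sub_apply]
  rw [show (Lp.compMeasurePreserving (g h) (mp h) F) z = _ from h2,
    show (Lp.compMeasurePreserving (g 0) (mp 0) F) z = _ from h3]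
  rw [h5]
  simp only [Function.comp, ContinuousMap.coe_mk, add_zero, h4, Real.norm_eq_abs]

noncomputable def vn {p : ℕ} (v : Fin p → ℝ) : ℝ := Real.sqrt (∑ i, v i ^ 2)
noncomputable def ff {p : ℕ} (s : ℝ) (i : Fin p) (v : Fin p → ℝ) : ℝ := vn v ^ (s - 1) * v i

lemma vn_cont {p : ℕ} : Continuous (vn : (Fin p → ℝ) → ℝ) := by unfold vn; fun_prop
lemma vn_nonneg {p : ℕ} (v : Fin p → ℝ) : 0 ≤ vn v := Real.sqrt_nonneg _
lemma ff_cont {p : ℕ} {s : ℝ} (hs : 1 < s) (i : Fin p) : Continuous (ff s i) := by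
  unfold ff
  exact (vn_cont.rpow_const fun _ => Or.inr (by linarith)).mul (continuous_apply i)
lemma abs_le_vn {p : ℕ} (v : Fin p → ℝ) (i : Fin p) : |v i| ≤ vn v := by
  rw [vn, ← Real.sqrt_sq_eq_abs]
  exact Real.sqrt_le_sqrt (Finset.single_le_sum (f := fun i => v i ^ 2) (fun i _ => sq_nonneg _) (Finset.mem_univ i))
lemma ff_nonneg {p : ℕ} (s : ℝ) (i : Fin p) {v : Fin p → ℝ} (hv : 0 ≤ v i) : 0 ≤ ff s i v :=
  mul_nonneg (Real.rpow_nonneg (vn_nonneg _) _) hv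
lemma ff_bound {p : ℕ} {s B : ℝ} (hs : 1 < s) (i : Fin p) {v : Fin p → ℝ} (hv : vn v ≤ B) :
    |ff s i v| ≤ B ^ s := by
  have hB : 0 ≤ B := (vn_nonneg v).trans hv
  rw [ff, abs_mul, abs_of_nonneg (Real.rpow_nonneg (vn_nonneg _) _)]
  calc vn v ^ (s - 1) * |v i| ≤ B ^ (s - 1) * B :=
        mul_le_mul (Real.rpow_le_rpow (vn_nonneg _) hv (by linarith)) ((abs_le_vn v i).trans hv)
          (abs_nonneg _) (by positivity)
    _ = B ^ s := by
      rcases hB.eq_or_lt with h | h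
      · rw [← h, mul_zero, Real.zero_rpow (by linarith)]
      · rw [← Real.rpow_add_one h.ne']; ring_nf

/-- bounded nonnegative measurable functions satisfying the local integral representation -/
def IS {n p : ℕ} (m : ℕ) (s B R : ℝ) (V : Fin p → Eu n → ℝ) : Prop :=
  (∀ i, Measurable (V i)) ∧ (∀ i x, 0 ≤ V i x) ∧ (∀ x, vn (fun j => V j x) ≤ B) ∧
  ∀ i y ρ, 0 < ρ → ‖y‖ + ρ < R → kap n m * V i y =
    ρ ^ 4 * (∫ z : Eu n, EE m z * ff s i (fun j => V j (y + ρ • z))) + ∫ z : Eu n, gg m z * V i (y + ρ • z)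

lemma sol_IS {n m p : ℕ} (hn : n = m + 4) {s B R : ℝ} (hB : 0 ≤ B) {V : Fin p → Eu n → ℝ} (hV : Sol s V R)
    (hb : ∀ x ∈ ball (0 : Eu n) R, vnorm V x ≤ B) :
    IS m s B R (fun i => (ball (0 : Eu n) R).indicator (V i)) := by
  refine ⟨fun i => ?_, fun i x => ?_, fun x => ?_, fun i y ρ hρ hy => ?_⟩
  · classical
    beta_reduce
    rw [← Set.piecewise_eq_indicator]
    exact ContinuousOn.measurable_piecewise (hV.2.1 i).continuousOn continuousOn_const measurableSet_ball
  · exact Set.indicator_nonneg (fun x hx => hV.1 i x hx) x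
  · by_cases hx : x ∈ ball (0 : Eu n) R
    · simp only [Set.indicator_of_mem hx]
      exact hb x hx
    · simp only [Set.indicator_of_notMem hx]
      simpa [vn] using hB
  · have hin : ∀ z : Eu n, ρ * ‖z‖ < R - ‖y‖ → y + ρ • z ∈ ball (0 : Eu n) R := by
      intro z hz
      rw [mem_ball, dist_zero_right]
      calc _ ≤ ‖y‖ + ‖ρ • z‖ := norm_add_le _ _
        _ = ‖y‖ + ρ * ‖z‖ := by rw [norm_smul, Real.norm_of_nonneg hρ.le]
        _ < _ := by linarith
    have hin1 : ∀ z : Eu n, ‖z‖ < 1 → y + ρ • z ∈ ball (0 : Eu n) R := fun z hz => hin z (by nlinarith)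
    have key := rep (w := fun z => 1 * V i (y + ρ • z)) hn (r := (R - ‖y‖) / ρ)
      (by rw [lt_div_iff₀ hρ]; linarith) (by
        refine contDiffOn_const.mul ((hV.2.1 i).comp (by fun_prop) ?_)
        intro z hz
        rw [mem_ball, dist_zero_right, lt_div_iff₀ hρ] at hz
        exact hin z (by linarith))
    simp only [smul_zero, add_zero, one_mul] at key
    have hy' : y ∈ ball (0 : Eu n) R := by simpa using hin1 0 (by simp)
    beta_reduce
    rw [Set.indicator_of_mem hy', key, ← integral_const_mul]
    congr 1
    · refine integral_congr_ae (Eventually.of_forall fun z => ?_)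
      by_cases hz : ‖z‖ < 1
      · have h1 := hin1 z hz
        have h2 := bilap_scale (V i) 1 ρ y z
        simp only [one_mul] at h2
        simp only [Set.indicator_of_mem h1]
        rw [h2, hV.2.2 i _ h1]
        simp only [ff, vn, vnorm]
        ring
      · simp [EE_large m (not_lt.1 hz)]
    · refine integral_congr_ae (Eventually.of_forall fun z => ?_)
      by_cases hz : ‖z‖ < 1
      · simp only [Set.indicator_of_mem (hin1 z hz)]
      · simp [gg_large m (not_lt.1 hz)]

lemma conv_diff {n : ℕ} {f H : Eu n → ℝ} (hf : Integrable f) (hH : Measurable H) {C : ℝ}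
    (hC : ∀ x, |H x| ≤ C) (y y' : Eu n) :
    |(∫ z, f z * H (y + z)) - ∫ z, f z * H (y' + z)| ≤ C * ∫ z, |f (z + (y - y')) - f z| := by
  have e : ∫ z, f z * H (y' + z) = ∫ z, f (z + (y - y')) * H (y + z) := by
    rw [← integral_add_right_eq_self _ (y - y')]
    refine integral_congr_ae (Eventually.of_forall fun z => ?_)
    simp only
    congr 2
    abel
  have hm : Measurable fun z => H (y + z) := by fun_prop
  have h1 : Integrable fun z => f z * H (y + z) :=
    hf.mul_bdd (c := C) hm.aestronglyMeasurable (Eventually.of_forall fun z => hC _)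
  have hf' : Integrable fun z => f (z + (y - y')) := hf.comp_add_right _
  have h2 : Integrable fun z => f (z + (y - y')) * H (y + z) :=
    hf'.mul_bdd (c := C) hm.aestronglyMeasurable (Eventually.of_forall fun z => hC _)
  rw [e, ← integral_sub h1 h2, ← integral_const_mul, ← Real.norm_eq_abs]
  refine norm_integral_le_of_norm_le ((hf'.sub hf).abs.const_mul C) (Eventually.of_forall fun z => ?_)
  rw [Real.norm_eq_abs, ← sub_mul, abs_mul, abs_sub_comm, mul_comm]
  exact mul_le_mul_of_nonneg_right (hC _) (abs_nonneg _)

lemma gg_int {n : ℕ} (m : ℕ) : Integrable (gg m : Eu n → ℝ) := by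
  refine (gg_cont m).integrable_of_hasCompactSupport ?_
  refine HasCompactSupport.intro (isCompact_closedBall 0 1) fun z hz => gg_large m ?_
  simp only [mem_closedBall, dist_zero_right, not_le] at hz
  exact hz.le

noncomputable def Om (n m : ℕ) (s B : ℝ) (h : Eu n) : ℝ :=
  B ^ s * (∫ z : Eu n, |EE m (z + h) - EE m z|) + B * ∫ z : Eu n, |gg m (z + h) - gg m z|

lemma Om_lim {n m : ℕ} (hn : n = m + 4) (s B : ℝ) : Tendsto (Om n m s B) (𝓝 0) (𝓝 0) := by
  have := ((trans_L1 (EE_int hn)).const_mul (B ^ s)).add ((trans_L1 (gg_int (n := n) m)).const_mul B)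
  rw [mul_zero, mul_zero, add_zero] at this
  exact this

lemma ff_meas {n p : ℕ} {s : ℝ} (hs : 1 < s) {V : Fin p → Eu n → ℝ} (hV : ∀ i, Measurable (V i)) (i : Fin p) :
    Measurable fun x => ff s i (fun j => V j x) :=
  (ff_cont hs i).measurable.comp (measurable_pi_lambda _ hV)

lemma equi {n m p : ℕ} (hn : n = m + 4) {s B R : ℝ} (hs : 1 < s) {V : Fin p → Eu n → ℝ}
    (hV : IS m s B R V) {y y' : Eu n} (hy : ‖y‖ + 1 < R) (hy' : ‖y'‖ + 1 < R) (i : Fin p) :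
    |kap n m * V i y - kap n m * V i y'| ≤ Om n m s B (y - y') := by
  rw [hV.2.2.2 i y 1 one_pos hy, hV.2.2.2 i y' 1 one_pos hy']
  simp only [one_pow, one_mul, one_smul]
  have h1 := conv_diff (EE_int hn) (ff_meas hs hV.1 i) (C := B ^ s)
    (fun x => ff_bound hs i (hV.2.2.1 x)) y y'
  have h2 := conv_diff (gg_int m) (hV.1 i) (C := B)
    (fun x => (abs_le_vn _ i).trans (hV.2.2.1 x)) y y'
  unfold Om
  rw [abs_le] at *
  constructor <;> linarith [h1.1, h1.2, h2.1, h2.2]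

theorem limit_exists {n m p : ℕ} (hn : n = m + 4) (hm : 1 ≤ m) {s B : ℝ} (hs : 1 < s)
    (H : ∀ k : ℕ, ∃ V : Fin p → Eu n → ℝ, IS m s B k V ∧ vn (fun j => V j 0) = 1) :
    ∃ U : Fin p → Eu n → ℝ, (∀ i, Continuous (U i)) ∧ (∀ R, IS m s B R U) ∧ vn (fun j => U j 0) = 1 := by
  choose V hV hV0 using H
  have hκ := kap_pos hn hm
  set κ := kap n m with hκd
  have hVB : ∀ k i x, V k i x ∈ Set.Icc 0 B := fun k i x =>
    ⟨(hV k).2.1 i x, (le_abs_self _).trans ((abs_le_vn (fun j => V k j x) i).trans ((hV k).2.2.1 x))⟩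
  obtain ⟨q, hq⟩ := TopologicalSpace.exists_dense_seq (Eu n)
  let T : ℕ → (Fin p × ℕ → Set.Icc (0 : ℝ) B) := fun k a => ⟨V k a.1 (q a.2), hVB k a.1 (q a.2)⟩
  obtain ⟨L, φ, hφ, hL⟩ := CompactSpace.tendsto_subseq T
  have hLq : ∀ i j, Tendsto (fun k => V (φ k) i (q j)) atTop (𝓝 (L (i, j) : ℝ)) := by
    intro i j
    have := (tendsto_pi_nhds.1 hL) (i, j)
    exact (continuous_subtype_val.tendsto _).comp this
  have hφk : ∀ C : ℝ, ∀ᶠ k : ℕ in atTop, C < (φ k : ℝ) := fun C =>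
    (tendsto_natCast_atTop_atTop.comp hφ.tendsto_atTop).eventually (eventually_gt_atTop C)
  have hcau : ∀ i y, ∃ l, Tendsto (fun k => V (φ k) i y) atTop (𝓝 l) := by
    intro i y
    refine cauchySeq_tendsto_of_complete ?_
    rw [Metric.cauchySeq_iff']
    intro ε hε
    have h1 : ∀ᶠ h in 𝓝 (0 : Eu n), Om n m s B h < κ * (ε / 4) :=
      (Om_lim hn s B).eventually (gt_mem_nhds (by positivity))
    have h2 : ∀ᶠ x in 𝓝 y, Om n m s B (y - x) < κ * (ε / 4) := by
      have : Tendsto (fun x => y - x) (𝓝 y) (𝓝 0) := by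
        have := (by fun_prop : Continuous fun x : Eu n => y - x).tendsto y
        simpa using this
      exact this.eventually h1
    obtain ⟨x, ⟨j, rfl⟩, hx⟩ := hq.inter_nhds_nonempty h2
    have h3 := (hLq i j).cauchySeq
    rw [Metric.cauchySeq_iff] at h3
    obtain ⟨N, hN⟩ := h3 (ε / 4) (by positivity)
    obtain ⟨M, hM⟩ := eventually_atTop.1 ((hφk (‖y‖ + 1)).and (hφk (‖q j‖ + 1)))
    have h4 : ∀ k ≥ M, |V (φ k) i y - V (φ k) i (q j)| < ε / 4 := by
      intro k hk
      have h5 := (equi hn hs (hV (φ k)) (hM k hk).1 (hM k hk).2 i).trans_lt hx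
      rw [← mul_sub, abs_mul, abs_of_pos hκ] at h5
      exact lt_of_mul_lt_mul_left h5 hκ.le
    refine ⟨max N M, fun k hk => ?_⟩
    have a1 := h4 k ((le_max_right _ _).trans hk)
    have a2 := h4 (max N M) (le_max_right _ _)
    have a3 := hN k ((le_max_left _ _).trans hk) (max N M) (le_max_left _ _)
    rw [Real.dist_eq] at *
    rw [abs_lt] at *
    constructor <;> linarith [a1.1, a1.2, a2.1, a2.2, a3.1, a3.2]
  choose U hU using hcau
  have hUv : ∀ x, Tendsto (fun k => fun j => V (φ k) j x) atTop (𝓝 (fun j => U j x)) :=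
    fun x => tendsto_pi_nhds.2 fun j => hU j x
  have hUe : ∀ i y y', |κ * U i y - κ * U i y'| ≤ Om n m s B (y - y') := by
    intro i y y'
    refine le_of_tendsto (((hU i y).const_mul κ).sub ((hU i y').const_mul κ)).abs ?_
    filter_upwards [hφk (‖y‖ + 1), hφk (‖y'‖ + 1)] with k h1 h2
    exact equi hn hs (hV (φ k)) h1 h2 i
  have hUc : ∀ i, Continuous (U i) := by
    intro i
    have : Continuous fun y => κ * U i y := by
      rw [continuous_iff_continuousAt]
      intro y
      rw [ContinuousAt, tendsto_iff_dist_tendsto_zero]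
      have h1 : Tendsto (fun x => Om n m s B (x - y)) (𝓝 y) (𝓝 0) := by
        have : Tendsto (fun x => x - y) (𝓝 y) (𝓝 0) := by
          have := (by fun_prop : Continuous fun x : Eu n => x - y).tendsto y
          simpa using this
        exact (Om_lim hn s B).comp this
      refine squeeze_zero (fun _ => dist_nonneg) (fun x => ?_) h1
      rw [Real.dist_eq]
      exact hUe i x y
    have h2 := this.const_mul κ⁻¹
    refine h2.congr fun y => ?_
    field_simp
  refine ⟨U, hUc, fun R => ⟨fun i => (hUc i).measurable, fun i x => ?_, fun x => ?_, ?_⟩, ?_⟩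
  · exact ge_of_tendsto' (hU i x) fun k => (hV (φ k)).2.1 i x
  · exact le_of_tendsto' ((vn_cont.tendsto _).comp (hUv x)) fun k => (hV (φ k)).2.2.1 x
  · intro i y ρ hρ _
    have t1 : Tendsto (fun k => ∫ z : Eu n, EE m z * ff s i (fun j => V (φ k) j (y + ρ • z))) atTop
        (𝓝 (∫ z : Eu n, EE m z * ff s i (fun j => U j (y + ρ • z)))) := by
      refine tendsto_integral_of_dominated_convergence (fun z => EE m z * B ^ s) ?_ ?_ ?_ ?_
      · intro k
        have := ff_meas hs (hV (φ k)).1 i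
        exact ((EE_meas m).mul (this.comp (by fun_prop : Measurable fun z : Eu n => y + ρ • z))).aestronglyMeasurable
      · exact (EE_int hn).mul_const _
      · intro k
        refine Eventually.of_forall fun z => ?_
        rw [norm_mul, Real.norm_of_nonneg (EE_nonneg m z)]
        exact mul_le_mul_of_nonneg_left (ff_bound hs i ((hV (φ k)).2.2.1 _)) (EE_nonneg m z)
      · refine Eventually.of_forall fun z => ?_
        exact (((ff_cont hs i).tendsto _).comp (hUv _)).const_mul _
    have t2 : Tendsto (fun k => ∫ z : Eu n, gg m z * V (φ k) i (y + ρ • z)) atTop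
        (𝓝 (∫ z : Eu n, gg m z * U i (y + ρ • z))) := by
      refine tendsto_integral_of_dominated_convergence (fun z => |gg m z| * B) ?_ ?_ ?_ ?_
      · intro k
        have := (hV (φ k)).1 i
        exact ((gg_cont m).measurable.mul (this.comp (by fun_prop : Measurable fun z : Eu n => y + ρ • z))).aestronglyMeasurable
      · exact (gg_int m).abs.mul_const _
      · intro k
        refine Eventually.of_forall fun z => ?_
        rw [norm_mul, Real.norm_eq_abs]
        refine mul_le_mul_of_nonneg_left ?_ (abs_nonneg _)
        exact (abs_le_vn (fun j => V (φ k) j (y + ρ • z)) i).trans ((hV (φ k)).2.2.1 _)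
      · refine Eventually.of_forall fun z => (hU i _).const_mul _
    refine tendsto_nhds_unique ((hU i y).const_mul κ) (((t1.const_mul (ρ ^ 4)).add t2).congr' ?_)
    filter_upwards [hφk (‖y‖ + ρ)] with k hk
    exact ((hV (φ k)).2.2.2 i y ρ hρ hk).symm
  · refine tendsto_nhds_unique ((vn_cont.tendsto _).comp (hUv 0)) ?_
    refine tendsto_const_nhds.congr fun k => ?_
    exact (hV0 (φ k)).symm

lemma u_le {p : ℕ} {s : ℝ} (hs : 1 < s) (i : Fin p) {v : Fin p → ℝ} (hv : 0 ≤ v i) {e : ℝ} (he : 0 < e) :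
    v i ≤ e + e ^ (-(s - 1)) * ff s i v := by
  have h0 := ff_nonneg s i hv
  rcases le_or_gt (v i) e with h | h
  · have : 0 ≤ e ^ (-(s - 1)) * ff s i v := by positivity
    linarith
  · have h1 : e ^ (s - 1) ≤ vn v ^ (s - 1) :=
      Real.rpow_le_rpow he.le (h.le.trans ((le_abs_self _).trans (abs_le_vn v i))) (by linarith)
    have h2 : v i ≤ e ^ (-(s - 1)) * ff s i v := by
      rw [Real.rpow_neg he.le, ff, ← mul_assoc]
      refine le_mul_of_one_le_left hv ?_
      rw [inv_mul_eq_div, one_le_div (by positivity)]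
      exact h1
    linarith

lemma cov {n m : ℕ} (hn : n = m + 4) (H : Eu n → ℝ) (y : Eu n) {ρ : ℝ} (hρ : 0 < ρ) :
    ρ ^ 4 * ∫ z : Eu n, EE m z * H (y + ρ • z) =
      ∫ z : Eu n, chi (‖ρ⁻¹ • z‖ ^ 2) * ((‖z‖ ^ m)⁻¹ * H (y + z)) := by
  have h := Measure.integral_comp_smul (volume : Measure (Eu n)) (fun z => EE m (ρ⁻¹ • z) * H (y + z)) ρ
  simp only [inv_smul_smul₀ hρ.ne'] at h
  rw [h, finrank_euclideanSpace_fin, smul_eq_mul, ← mul_assoc, ← integral_const_mul]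
  refine integral_congr_ae (Eventually.of_forall fun z => ?_)
  simp only [EE, norm_smul, norm_inv, Real.norm_of_nonneg hρ.le]
  rw [abs_of_nonneg (by positivity), show ρ ^ n = ρ ^ m * ρ ^ 4 by rw [hn, pow_add], mul_pow ρ⁻¹ ‖z‖ m, mul_inv,
    mul_inv, inv_pow ρ m, inv_inv]
  field_simp

theorem global_int {n m p : ℕ} (hn : n = m + 4) (hm : 1 ≤ m) {s B : ℝ} (hs : 1 < s)
    {U : Fin p → Eu n → ℝ} (hc : ∀ i, Continuous (U i)) (hU : ∀ R, IS m s B R U) (i : Fin p) (y : Eu n) :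
    Integrable (fun z : Eu n => (‖z‖ ^ m)⁻¹ * ff s i (fun j => U j (y + z))) ∧
    kap n m * U i y = ∫ z : Eu n, (‖z‖ ^ m)⁻¹ * ff s i (fun j => U j (y + z)) := by
  have hne : Nonempty (Fin n) := ⟨⟨0, by omega⟩⟩
  have hchi : Continuous chi := contDiff_chi (k := 0) |>.continuous
  set F : Eu n → ℝ := fun x => ff s i (fun j => U j x) with hF
  have hFc : Continuous F := (ff_cont hs i).comp (continuous_pi hc)
  have hF0 : ∀ x, 0 ≤ F x := fun x => ff_nonneg s i ((hU 0).2.1 i x)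
  have hFB : ∀ x, F x ≤ B ^ s := fun x => (le_abs_self _).trans (ff_bound hs i ((hU 0).2.2.1 x))
  have hUB : ∀ x, |U i x| ≤ B := fun x => (abs_le_vn (fun j => U j x) i).trans ((hU 0).2.2.1 x)
  have hB : 0 ≤ B := (abs_nonneg _).trans (hUB 0)
  set κ := kap n m
  set N : ℝ := ∫ z : Eu n, |gg m z|
  have hN : 0 ≤ N := integral_nonneg fun _ => abs_nonneg _
  have hgU : ∀ ρ : ℝ, |∫ z : Eu n, gg m z * U i (y + ρ • z)| ≤ N * B := by
    intro ρ
    rw [← integral_mul_const, ← Real.norm_eq_abs]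
    refine norm_integral_le_of_norm_le ((gg_int m).abs.mul_const B) (Eventually.of_forall fun z => ?_)
    rw [norm_mul, Real.norm_eq_abs, Real.norm_eq_abs]
    exact mul_le_mul_of_nonneg_left (hUB _) (abs_nonneg _)
  have eqn : ∀ ρ : ℝ, 0 < ρ → κ * U i y = ρ ^ 4 * (∫ z : Eu n, EE m z * F (y + ρ • z)) +
      ∫ z : Eu n, gg m z * U i (y + ρ • z) := fun ρ hρ =>
    (hU (‖y‖ + ρ + 1)).2.2.2 i y ρ hρ (by linarith)
  set C := |κ * U i y| + N * B
  have hC : 0 ≤ C := by positivity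
  have bd : ∀ ρ : ℝ, 0 < ρ → ρ ^ 4 * (∫ z : Eu n, EE m z * F (y + ρ • z)) ≤ C := by
    intro ρ hρ
    have h1 := eqn ρ hρ
    have h2 := (abs_le.1 (hgU ρ)).1
    have h3 := le_abs_self (κ * U i y)
    simp only [C]; linarith
  -- integrability
  have hEint : ∀ ρ : ℝ, Integrable fun z : Eu n => EE m z * F (y + ρ • z) := by
    intro ρ
    refine (EE_int hn).mul_bdd (c := B ^ s) (by fun_prop) (Eventually.of_forall fun z => ?_)
    rw [Real.norm_of_nonneg (hF0 _)]
    exact hFB _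
  have hloc : ∀ r : ℝ, IntegrableOn (fun z : Eu n => (‖z‖ ^ m)⁻¹ * F (y + z)) (ball 0 r) := by
    intro r
    refine (kint hn r).mul_bdd (c := B ^ s) (by fun_prop) (Eventually.of_forall fun z => ?_)
    rw [Real.norm_of_nonneg (hF0 _)]
    exact hFB _
  have hcint : ∀ ρ : ℝ, 0 < ρ → Integrable fun z : Eu n => chi (‖ρ⁻¹ • z‖ ^ 2) * ((‖z‖ ^ m)⁻¹ * F (y + z)) := by
    intro ρ hρ
    have h1 := (hloc ρ).bdd_mul (c := 1) (f := fun z : Eu n => chi (‖ρ⁻¹ • z‖ ^ 2)) (by fun_prop)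
      (Eventually.of_forall fun z => by rw [Real.norm_of_nonneg (chi_nonneg _)]; exact chi_le _)
    change IntegrableOn (fun z : Eu n => chi (‖ρ⁻¹ • z‖ ^ 2) * ((‖z‖ ^ m)⁻¹ * F (y + z))) (ball 0 ρ) at h1
    rwa [integrableOn_iff_integrable_of_support_subset] at h1
    intro z hz
    by_contra h
    simp only [mem_ball, dist_zero_right, not_lt] at h
    refine hz ?_
    simp only
    rw [chi_zero, zero_mul]
    rw [norm_smul, norm_inv, Real.norm_of_nonneg hρ.le]
    have : 1 ≤ ρ⁻¹ * ‖z‖ := by rw [inv_mul_eq_div, one_le_div hρ]; exact h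
    nlinarith
  have hIntg : Integrable (fun z : Eu n => (‖z‖ ^ m)⁻¹ * F (y + z)) := by
    refine (aecover_ball (μ := (volume : Measure (Eu n))) (x := (0 : Eu n)) tendsto_id).integrable_of_integral_norm_bounded
      C (fun r => hloc r) ?_
    filter_upwards [eventually_gt_atTop (0 : ℝ)] with r hr
    refine le_trans ?_ (bd (2 * r) (by positivity))
    rw [cov hn F y (by positivity), ← integral_indicator measurableSet_ball]
    refine integral_mono ((integrable_indicator_iff measurableSet_ball).2 (hloc r).norm) (hcint _ (by positivity)) ?_
    intro z
    by_cases hz : z ∈ ball (0 : Eu n) r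
    · simp only [id, Set.indicator_of_mem hz]
      rw [chi_one, one_mul, Real.norm_of_nonneg]
      · exact mul_nonneg (by positivity) (hF0 _)
      · rw [mem_ball, dist_zero_right] at hz
        rw [norm_smul, norm_inv, Real.norm_of_nonneg (by positivity)]
        have h1 : (2 * r)⁻¹ * ‖z‖ ≤ 1 / 2 := by
          rw [inv_mul_le_iff₀ (by positivity)]; linarith
        have h2 : 0 ≤ (2 * r)⁻¹ * ‖z‖ := by positivity
        nlinarith
    · simp only [id, Set.indicator_of_notMem hz]
      exact mul_nonneg (chi_nonneg _) (mul_nonneg (by positivity) (hF0 _))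
  refine ⟨hIntg, ?_⟩
  have t1 : Tendsto (fun ρ : ℝ => ρ ^ 4 * (∫ z : Eu n, EE m z * F (y + ρ • z))) atTop
      (𝓝 (∫ z : Eu n, (‖z‖ ^ m)⁻¹ * F (y + z))) := by
    have : Tendsto (fun ρ : ℝ => ∫ z : Eu n, chi (‖ρ⁻¹ • z‖ ^ 2) * ((‖z‖ ^ m)⁻¹ * F (y + z))) atTop
      (𝓝 (∫ z : Eu n, (‖z‖ ^ m)⁻¹ * F (y + z))) := by
      refine tendsto_integral_filter_of_dominated_convergence (fun z : Eu n => (‖z‖ ^ m)⁻¹ * F (y + z)) ?_ ?_ hIntg ?_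
      · filter_upwards [eventually_gt_atTop (0 : ℝ)] with r hr
        exact (hcint r hr).aestronglyMeasurable
      · refine Eventually.of_forall fun ρ => Eventually.of_forall fun z => ?_
        have h0 : 0 ≤ (‖z‖ ^ m)⁻¹ * F (y + z) := mul_nonneg (by positivity) (hF0 _)
        rw [Real.norm_of_nonneg (mul_nonneg (chi_nonneg _) h0)]
        exact mul_le_of_le_one_left h0 (chi_le _)
      · refine Eventually.of_forall fun z => ?_
        refine tendsto_const_nhds.congr' ?_
        filter_upwards [eventually_ge_atTop (2 * ‖z‖ + 1)] with ρ hρ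
        have hρ0 : 0 < ρ := by have := norm_nonneg z; linarith
        rw [chi_one, one_mul]
        rw [norm_smul, norm_inv, Real.norm_of_nonneg (by positivity)]
        have h1 : ρ⁻¹ * ‖z‖ ≤ 1 / 2 := by
          rw [inv_mul_le_iff₀ (by positivity)]; linarith
        have h2 : 0 ≤ ρ⁻¹ * ‖z‖ := by positivity
        nlinarith
    refine this.congr' ?_
    filter_upwards [eventually_gt_atTop (0 : ℝ)] with ρ hρ
    exact (cov hn F y hρ).symm
  obtain ⟨G, hG⟩ : ∃ G, ∀ z : Eu n, ‖gg m z‖ ≤ G :=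
    (gg_cont m).bounded_above_of_compact_support
      (HasCompactSupport.intro (isCompact_closedBall 0 1) fun z hz => gg_large m (by
        simp only [mem_closedBall, dist_zero_right, not_le] at hz
        exact hz.le))
  have hG0 : 0 ≤ G := (norm_nonneg _).trans (hG 0)
  have t2 : Tendsto (fun ρ : ℝ => ∫ z : Eu n, gg m z * U i (y + ρ • z)) atTop (𝓝 0) := by
    set a := 2 / (s - 1)
    have hs' : 0 < s - 1 := by linarith
    have ha : 0 < a := by positivity
    set W := (volume : Measure (Eu n)).real (ball 0 1)
    have hb : ∀ ρ : ℝ, 0 < ρ → |∫ z : Eu n, gg m z * U i (y + ρ • z)| ≤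
        G * W * ρ ^ (-a) + G * (2 ^ n * C / 2 ^ 4) * (ρ ^ 2)⁻¹ := by
      intro ρ hρ
      have e1 : ∫ z : Eu n, EE m ((2 : ℝ)⁻¹ • z) * F (y + ρ • z) = 2 ^ n * ∫ z : Eu n, EE m z * F (y + (2 * ρ) • z) := by
        have h := Measure.integral_comp_smul (volume : Measure (Eu n)) (fun z => EE m ((2 : ℝ)⁻¹ • z) * F (y + ρ • z)) 2
        simp only [inv_smul_smul₀ (two_ne_zero : (2 : ℝ) ≠ 0), smul_smul, mul_comm ρ 2] at h
        rw [h, finrank_euclideanSpace_fin, smul_eq_mul, abs_of_nonneg (by positivity), ← mul_assoc,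
          mul_inv_cancel₀ (by positivity), one_mul]
      have i1 : Integrable fun z : Eu n => EE m ((2 : ℝ)⁻¹ • z) * F (y + ρ • z) := by
        have := (hEint (2 * ρ)).comp_smul (R := (2 : ℝ)⁻¹) (by norm_num)
        refine this.congr (Eventually.of_forall fun z => ?_)
        simp only [smul_smul]
        congr 3
        congr 1
        ring
      have h2 := bd (2 * ρ) (by positivity)
      have h3 : |∫ z : Eu n, gg m z * U i (y + ρ • z)| ≤
          ∫ z : Eu n, ((ball (0 : Eu n) 1).indicator (fun _ => G * ρ ^ (-a)) z +
            G * ρ ^ 2 * (EE m ((2 : ℝ)⁻¹ • z) * F (y + ρ • z))) := by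
        rw [← Real.norm_eq_abs]
        refine norm_integral_le_of_norm_le ?_ ?_
        · refine Integrable.add ?_ (i1.const_mul _)
          rw [integrable_indicator_iff measurableSet_ball]
          exact integrableOn_const measure_ball_lt_top.ne
        · have : ∀ᵐ z : Eu n, z ≠ 0 := by
            rw [ae_iff]; simp
          filter_upwards [this] with z hz0
          by_cases hz : ‖z‖ < 1
          · have hzb : z ∈ ball (0 : Eu n) 1 := by simpa using hz
            rw [Set.indicator_of_mem hzb, norm_mul]
            have h5 := u_le hs i ((hU 0).2.1 i (y + ρ • z)) (e := ρ ^ (-a)) (by positivity) (v := fun j => U j (y + ρ • z))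
            rw [← Real.rpow_mul hρ.le, show -a * (-(s - 1)) = ((2 : ℕ) : ℝ) by simp only [a]; field_simp; norm_num,
              Real.rpow_natCast] at h5
            have h6 : 1 ≤ EE m ((2 : ℝ)⁻¹ • z) := by
              have hz1 : 0 < ‖z‖ := norm_pos_iff.2 hz0
              rw [EE, norm_smul, norm_inv, Real.norm_ofNat, chi_one (by nlinarith), one_mul]
              refine (one_le_inv₀ (by positivity)).2 (pow_le_one₀ (by positivity) (by linarith))
            have h7 : F (y + ρ • z) ≤ EE m ((2 : ℝ)⁻¹ • z) * F (y + ρ • z) := le_mul_of_one_le_left (hF0 _) h6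
            have h8 : U i (y + ρ • z) ≤ ρ ^ (-a) + ρ ^ 2 * (EE m ((2 : ℝ)⁻¹ • z) * F (y + ρ • z)) := by
              refine h5.trans ?_
              gcongr
            rw [Real.norm_of_nonneg ((hU 0).2.1 i _)]
            calc _ ≤ G * (ρ ^ (-a) + ρ ^ 2 * (EE m ((2 : ℝ)⁻¹ • z) * F (y + ρ • z))) :=
                  mul_le_mul (hG z) h8 ((hU 0).2.1 i _) hG0
              _ = _ := by ring
          · rw [gg_large m (not_lt.1 hz), zero_mul, norm_zero]
            refine add_nonneg (Set.indicator_nonneg (fun _ _ => by positivity) _) ?_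
            exact mul_nonneg (by positivity) (mul_nonneg (EE_nonneg _ _) (hF0 _))
      rw [integral_add, integral_indicator measurableSet_ball, setIntegral_const, integral_const_mul, e1] at h3
      · refine h3.trans ?_
        rw [smul_eq_mul]
        have h9 : (∫ z : Eu n, EE m z * F (y + (2 * ρ) • z)) ≤ C / (2 * ρ) ^ 4 := by
          rw [le_div_iff₀ (by positivity), mul_comm]; exact h2
        have : G * ρ ^ 2 * (2 ^ n * ∫ z : Eu n, EE m z * F (y + (2 * ρ) • z)) ≤
            G * ρ ^ 2 * (2 ^ n * (C / (2 * ρ) ^ 4)) := by gcongr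
        refine (add_le_add le_rfl this).trans (le_of_eq ?_)
        simp only [W]
        field_simp
      · rw [integrable_indicator_iff measurableSet_ball]
        exact integrableOn_const measure_ball_lt_top.ne
      · exact i1.const_mul _
    have l1 : Tendsto (fun ρ : ℝ => G * W * ρ ^ (-a) + G * (2 ^ n * C / 2 ^ 4) * (ρ ^ 2)⁻¹) atTop (𝓝 0) := by
      have h1 := (tendsto_rpow_neg_atTop ha).const_mul (G * W)
      have h2 := (tendsto_inv_atTop_zero.comp (tendsto_pow_atTop (α := ℝ) (two_ne_zero))).const_mul (G * (2 ^ n * C / 2 ^ 4))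
      have := h1.add h2
      rw [mul_zero, mul_zero, add_zero] at this
      exact this
    refine squeeze_zero_norm' ?_ l1
    filter_upwards [eventually_gt_atTop (0 : ℝ)] with ρ hρ
    exact hb ρ hρ
  have t3 := t1.add t2
  rw [add_zero] at t3
  refine tendsto_nhds_unique (tendsto_const_nhds.congr' ?_) t3
  filter_upwards [eventually_gt_atTop (0 : ℝ)] with ρ hρ
  exact eqn ρ hρ

lemma vn_eq_norm {p : ℕ} (v : Fin p → ℝ) : vn v = ‖(WithLp.toLp 2 v : EuclideanSpace ℝ (Fin p))‖ := by
  rw [EuclideanSpace.norm_eq, vn]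
  simp

lemma vn_mono {p : ℕ} {v w : Fin p → ℝ} (hv : ∀ j, 0 ≤ v j) (h : ∀ j, v j ≤ w j) : vn v ≤ vn w := by
  refine Real.sqrt_le_sqrt (Finset.sum_le_sum fun j _ => ?_)
  have := hv j; have := h j
  gcongr

lemma vn_le_sum {p : ℕ} (v : Fin p → ℝ) : vn v ≤ ∑ j, |v j| := by
  have h0 : 0 ≤ ∑ j, |v j| := Finset.sum_nonneg fun _ _ => abs_nonneg _
  rw [vn, Real.sqrt_le_left h0]
  calc ∑ i, v i ^ 2 ≤ ∑ i, |v i| * ∑ j, |v j| := by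
        refine Finset.sum_le_sum fun i _ => ?_
        rw [← sq_abs, sq]
        exact mul_le_mul_of_nonneg_left
          (Finset.single_le_sum (f := fun j => |v j|) (fun j _ => abs_nonneg _) (Finset.mem_univ i)) (abs_nonneg _)
    _ = _ := by rw [← Finset.sum_mul, sq]

lemma vn_le_card {p : ℕ} {v : Fin p → ℝ} {B : ℝ} (h : ∀ j, |v j| ≤ B) : vn v ≤ p * B := by
  refine (vn_le_sum v).trans ((Finset.sum_le_sum fun j _ => h j).trans ?_)
  simp

lemma ff_mono {p : ℕ} {s : ℝ} (hs : 1 < s) (i : Fin p) {v w : Fin p → ℝ} (hv : ∀ j, 0 ≤ v j)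
    (h : ∀ j, v j ≤ w j) : ff s i v ≤ ff s i w :=
  mul_le_mul (Real.rpow_le_rpow (vn_nonneg _) (vn_mono hv h) (by linarith)) (h i) (hv i)
    (Real.rpow_nonneg (vn_nonneg _) _)

lemma rpow_diff {a b s : ℝ} (hs : 1 < s) (ha : 0 ≤ a) (hab : a ≤ b) :
    b ^ s - a ^ s ≤ s * b ^ (s - 1) * (b - a) := by
  rcases ha.eq_or_lt with h | h
  · rw [← h, Real.zero_rpow (by linarith), sub_zero, sub_zero, mul_assoc]
    rcases (ha.trans hab).eq_or_lt with hb | hb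
    · rw [← hb, Real.zero_rpow (by linarith)]; simp
    · rw [← Real.rpow_add_one hb.ne', sub_add_cancel]
      have := Real.rpow_pos_of_pos hb s
      nlinarith
  · have hb : 0 < b := h.trans_le hab
    have h1 := one_add_mul_self_le_rpow_one_add (s := a / b - 1) (by have : 0 ≤ a / b := by positivity
                                                                     linarith) hs.le
    rw [add_sub_cancel, Real.div_rpow ha hb.le, le_div_iff₀ (by positivity)] at h1
    have h2 : b ^ s = b ^ (s - 1) * b := by rw [← Real.rpow_add_one hb.ne', sub_add_cancel]
    have h3 : (1 + s * (a / b - 1)) * b ^ s = b ^ s + s * b ^ (s - 1) * (a - b) := by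
      rw [h2]; field_simp
    nlinarith

lemma ff_lip {p : ℕ} {s M W : ℝ} (hs : 1 < s) (hW : 0 ≤ W) (i : Fin p) {v w : Fin p → ℝ} (hv : ∀ j, 0 ≤ v j)
    (h : ∀ j, v j ≤ w j) (hw : ∀ j, w j ≤ v j + W) (hM : vn w ≤ M) :
    ff s i w - ff s i v ≤ M ^ (s - 1) * (1 + s * p) * W := by
  have hvw := vn_mono hv h
  have h0 := vn_nonneg v
  have hM0 : 0 ≤ M := (vn_nonneg w).trans hM
  have h1 : vn w ^ (s - 1) ≤ M ^ (s - 1) := Real.rpow_le_rpow (vn_nonneg _) hM (by linarith)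
  have h1' : 0 ≤ vn w ^ (s - 1) := Real.rpow_nonneg (vn_nonneg _) _
  have h2 : vn w - vn v ≤ p * W := by
    have : vn w ≤ vn v + vn (w - v) := by
      rw [vn_eq_norm, vn_eq_norm, vn_eq_norm]
      refine le_trans (le_of_eq ?_) (norm_add_le _ _)
      congr 1
      rw [← WithLp.toLp_add]
      congr 1
      ext j
      simp
    have h3 : vn (w - v) ≤ p * W := vn_le_card fun j => by
      rw [Pi.sub_apply, abs_of_nonneg (by linarith [h j])]; linarith [hw j]
    linarith
  have h3 : vn v ^ (s - 1) ≤ vn w ^ (s - 1) := Real.rpow_le_rpow h0 hvw (by linarith)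
  have pw : ∀ x : ℝ, 0 ≤ x → x ^ (s - 1) * x = x ^ s := by
    intro x hx
    rcases hx.eq_or_lt with hb | hb
    · rw [← hb, Real.zero_rpow (x := s) (by linarith)]; simp
    · rw [← Real.rpow_add_one hb.ne', sub_add_cancel]
  have h4 : (vn w ^ (s - 1) - vn v ^ (s - 1)) * v i ≤ s * M ^ (s - 1) * (p * W) := by
    calc (vn w ^ (s - 1) - vn v ^ (s - 1)) * v i ≤ (vn w ^ (s - 1) - vn v ^ (s - 1)) * vn v :=
          mul_le_mul_of_nonneg_left ((le_abs_self _).trans (abs_le_vn v i)) (by linarith)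
      _ ≤ vn w ^ s - vn v ^ s := by
          rw [sub_mul, pw _ h0, ← pw _ (vn_nonneg w)]
          have := mul_le_mul_of_nonneg_left hvw h1'
          linarith
      _ ≤ s * vn w ^ (s - 1) * (vn w - vn v) := rpow_diff hs h0 hvw
      _ ≤ s * M ^ (s - 1) * (p * W) := by
          refine mul_le_mul (mul_le_mul_of_nonneg_left h1 (by linarith)) h2 (by linarith) (by positivity)
  have h5 : vn w ^ (s - 1) * (w i - v i) ≤ M ^ (s - 1) * W :=
    mul_le_mul h1 (by linarith [hw i]) (by linarith [h i]) (by positivity)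
  have : ff s i w - ff s i v = vn w ^ (s - 1) * (w i - v i) + (vn w ^ (s - 1) - vn v ^ (s - 1)) * v i := by
    unfold ff; ring
  rw [this]
  nlinarith

lemma ff_smul {p : ℕ} {s c : ℝ} (hc : 0 < c) (i : Fin p) (v : Fin p → ℝ) :
    ff s i (fun j => c * v j) = c ^ s * ff s i v := by
  have : vn (fun j => c * v j) = c * vn v := by
    unfold vn
    simp_rw [mul_pow]
    rw [← Finset.mul_sum, Real.sqrt_mul (by positivity), Real.sqrt_sq hc.le]
  rw [ff, this, ff, Real.mul_rpow hc.le (vn_nonneg _)]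
  have h2 : c ^ s = c ^ (s - 1) * c := by rw [← Real.rpow_add_one hc.ne', sub_add_cancel]
  rw [h2]; ring

lemma ff_eq_zero {p : ℕ} {s : ℝ} (i : Fin p) {v : Fin p → ℝ} (h : ff s i v = 0) : v i = 0 := by
  unfold ff at h
  rcases mul_eq_zero.1 h with h | h
  · by_contra hne
    have : 0 < vn v := (abs_pos.2 hne).trans_le (abs_le_vn v i)
    exact (Real.rpow_pos_of_pos this _).ne' h
  · exact h

/-- global integral system -/
structure GI {n p : ℕ} (m : ℕ) (s B κ : ℝ) (U : Fin p → Eu n → ℝ) : Prop where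
  hn : n = m + 4
  hm : 1 ≤ m
  hs : 1 < s
  hκ : 0 < κ
  cont : ∀ i, Continuous (U i)
  nn : ∀ i x, 0 ≤ U i x
  bd : ∀ i x, U i x ≤ B
  int : ∀ i y, Integrable (fun z : Eu n => (‖y - z‖ ^ m)⁻¹ * ff s i (fun j => U j z))
  eqn : ∀ i y, κ * U i y = ∫ z : Eu n, (‖y - z‖ ^ m)⁻¹ * ff s i (fun j => U j z)

lemma GI.translate {n p m : ℕ} {s B κ : ℝ} {U : Fin p → Eu n → ℝ} (h : GI m s B κ U) (c : Eu n) :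
    GI m s B κ (fun i x => U i (c + x)) := by
  have e : ∀ y z : Eu n, y - z = (c + y) - (c + z) := fun y z => by abel
  refine ⟨h.hn, h.hm, h.hs, h.hκ, fun i => (h.cont i).comp (by fun_prop), fun i x => h.nn i _, fun i x => h.bd i _,
    fun i y => ?_, fun i y => ?_⟩
  · have := (h.int i (c + y)).comp_add_left c
    simpa only [e y] using this
  · rw [h.eqn, ← integral_add_left_eq_self _ c]
    simp only [e y]

lemma GI.F_cont {n p m : ℕ} {s B κ : ℝ} {U : Fin p → Eu n → ℝ} (h : GI m s B κ U) (i : Fin p) :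
    Continuous fun x => ff s i (fun j => U j x) := (ff_cont h.hs i).comp (continuous_pi h.cont)

lemma GI.F_nn {n p m : ℕ} {s B κ : ℝ} {U : Fin p → Eu n → ℝ} (h : GI m s B κ U) (i : Fin p) (x : Eu n) :
    0 ≤ ff s i (fun j => U j x) := ff_nonneg s i (h.nn i x)

lemma GI.pos {n p m : ℕ} {s B κ : ℝ} {U : Fin p → Eu n → ℝ} (h : GI m s B κ U) (i : Fin p) {x0 : Eu n}
    (hx0 : U i x0 ≠ 0) (y : Eu n) : 0 < U i y := by
  have hne : Nonempty (Fin n) := ⟨⟨0, by have := h.hn; omega⟩⟩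
  refine lt_of_le_of_ne (h.nn i y) fun h0 => hx0 ?_
  have h1 := h.eqn i y
  rw [← h0, mul_zero, eq_comm, integral_eq_zero_iff_of_nonneg (fun z => mul_nonneg (by positivity) (h.F_nn i z))
    (h.int i y)] at h1
  have hy : ∀ᵐ z : Eu n, z ≠ y := by rw [ae_iff]; simp
  have h2 : (fun x => ff s i (fun j => U j x)) =ᵐ[volume] fun _ => 0 := by
    filter_upwards [h1, hy] with z hz hzy
    rcases mul_eq_zero.1 hz with h3 | h3
    · exfalso
      have : 0 < ‖y - z‖ := norm_pos_iff.2 (sub_ne_zero.2 hzy.symm)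
      exact (inv_pos.2 (pow_pos this m)).ne' h3
    · exact h3
  have h3 := Continuous.ae_eq_iff_eq volume (h.F_cont i) continuous_const |>.1 h2
  exact ff_eq_zero i (congrFun h3 x0)

noncomputable def iv {n : ℕ} (l : ℝ) (y : Eu n) : Eu n := (l / ‖y‖) ^ 2 • y

lemma iv_eq {n : ℕ} (l : ℝ) : (iv l : Eu n → Eu n) = EuclideanGeometry.inversion 0 l := by
  ext1 y
  simp [iv, EuclideanGeometry.inversion]

lemma norm_iv {n : ℕ} (l : ℝ) (y : Eu n) : ‖iv l y‖ = l ^ 2 / ‖y‖ := by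
  have := EuclideanGeometry.dist_inversion_center (0 : Eu n) y l
  rw [← iv_eq] at this
  simpa using this

lemma iv_iv {n : ℕ} {l : ℝ} (hl : 0 < l) (y : Eu n) : iv l (iv l y) = y := by
  rw [iv_eq]; exact EuclideanGeometry.inversion_inversion 0 hl.ne' y

lemma iv_ne {n : ℕ} {l : ℝ} (hl : 0 < l) {y : Eu n} (hy : y ≠ 0) : iv l y ≠ 0 := by
  rw [iv_eq, Ne, EuclideanGeometry.inversion_eq_center hl.ne']; exact hy

lemma norm_sub_iv {n : ℕ} (l : ℝ) {y z : Eu n} (hy : y ≠ 0) (hz : z ≠ 0) :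
    ‖y - iv l z‖ = ‖y‖ / ‖z‖ * ‖iv l y - z‖ := by
  have := EuclideanGeometry.dist_inversion_mul_dist_center_eq (c := (0 : Eu n)) (R := l) hy hz
  rw [← iv_eq, dist_zero_right, dist_zero_right, dist_eq_norm, dist_eq_norm] at this
  have hz' := norm_pos_iff.2 hz
  field_simp
  linarith

lemma sq_iv {n : ℕ} {l : ℝ} (hl : 0 < l) {y : Eu n} (hy : y ≠ 0) (z : Eu n) :
    (‖y‖ / l * ‖iv l y - z‖) ^ 2 = ‖y - z‖ ^ 2 + (‖y‖ ^ 2 - l ^ 2) * (‖z‖ ^ 2 - l ^ 2) / l ^ 2 := by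
  have hy' := norm_pos_iff.2 hy
  rw [mul_pow, norm_sub_sq_real, norm_sub_sq_real, norm_iv, iv, real_inner_smul_left]
  field_simp
  ring

lemma inv_split {n : ℕ} (hn : 0 < n) {l : ℝ} (hl : 0 < l) {G : Eu n → ℝ} (hG : Integrable G) :
    IntegrableOn (fun z => (l / ‖z‖) ^ (2 * n) * G (iv l z)) {z : Eu n | l < ‖z‖} ∧
    ∫ z, G z = (∫ z in {z : Eu n | l < ‖z‖}, G z) +
      ∫ z in {z : Eu n | l < ‖z‖}, (l / ‖z‖) ^ (2 * n) * G (iv l z) := by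
  have hne : Nonempty (Fin n) := ⟨⟨0, hn⟩⟩
  set S : Set (Eu n) := {z : Eu n | l < ‖z‖} with hS
  have hSm : MeasurableSet S := measurableSet_lt measurable_const measurable_norm
  have hS0 : ∀ z ∈ S, z ≠ 0 := fun z hz h => by
    rw [hS, Set.mem_ofPred_eq, h, norm_zero] at hz; linarith
  have hd : ∀ z ∈ S, HasFDerivWithinAt (iv l) ((l / ‖z‖) ^ 2 • ((ℝ ∙ z)ᗮ.reflection : Eu n →L[ℝ] Eu n)) S z := by
    intro z hz
    have := EuclideanGeometry.hasFDerivAt_inversion (R := l) (hS0 z hz)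
    rw [← iv_eq, dist_zero_right, sub_zero] at this
    exact this.hasFDerivWithinAt
  have hdet : ∀ z : Eu n, |((l / ‖z‖) ^ 2 • ((ℝ ∙ z)ᗮ.reflection : Eu n →L[ℝ] Eu n)).det| = (l / ‖z‖) ^ (2 * n) := by
    intro z
    rw [ContinuousLinearMap.det]
    have : ((((l / ‖z‖) ^ 2 • ((ℝ ∙ z)ᗮ.reflection : Eu n →L[ℝ] Eu n)) : Eu n →L[ℝ] Eu n) : Eu n →ₗ[ℝ] Eu n)
      = (l / ‖z‖) ^ 2 • ((ℝ ∙ z)ᗮ.reflection.toLinearMap) := rfl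
    rw [this, LinearMap.det_smul, Submodule.det_reflection, abs_mul, abs_pow (-1 : ℝ), abs_neg, abs_one, one_pow, mul_one,
      finrank_euclideanSpace_fin, abs_of_nonneg (by positivity), ← pow_mul]
  have hinj : Set.InjOn (iv l) S := by
    rw [iv_eq]; exact (EuclideanGeometry.inversion_injective 0 hl.ne').injOn
  have himg : iv l '' S = ball 0 l \ {0} := by
    ext x
    constructor
    · rintro ⟨z, hz, rfl⟩
      have hz' : 0 < ‖z‖ := hl.trans hz
      refine ⟨?_, iv_ne hl (hS0 z hz)⟩
      rw [mem_ball, dist_zero_right, norm_iv, div_lt_iff₀ hz', sq]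
      exact mul_lt_mul_of_pos_left hz hl
    · rintro ⟨hx, hx0⟩
      refine ⟨iv l x, ?_, iv_iv hl x⟩
      rw [mem_ball, dist_zero_right] at hx
      have : 0 < ‖x‖ := norm_pos_iff.2 hx0
      rw [hS, Set.mem_ofPred_eq, norm_iv, lt_div_iff₀ this, sq]
      exact mul_lt_mul_of_pos_left hx hl
  have hae : (iv l '' S : Set (Eu n)) =ᵐ[volume] (Sᶜ : Set (Eu n)) := by
    rw [himg]
    have h1 : ∀ᵐ z : Eu n, z ≠ 0 := by rw [ae_iff]; simp
    have h2 : ∀ᵐ z : Eu n, ‖z‖ ≠ l := by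
      rw [ae_iff]
      have := Measure.addHaar_sphere_of_ne_zero (volume : Measure (Eu n)) 0 hl.ne'
      simpa [sphere] using this
    filter_upwards [h1, h2] with z hz1 hz2
    apply propext
    change z ∈ ball 0 l \ {0} ↔ z ∈ Sᶜ
    simp only [Set.mem_sdiff, mem_ball, dist_zero_right, Set.mem_singleton_iff, hz1, not_false_eq_true, and_true,
      hS, Set.mem_compl_iff, Set.mem_ofPred_eq, not_lt]
    exact ⟨le_of_lt, fun h => lt_of_le_of_ne h hz2⟩
  have i1 := (integrableOn_image_iff_integrableOn_abs_det_fderiv_smul volume hSm hd hinj G).1 hG.integrableOn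
  simp only [hdet, smul_eq_mul] at i1
  refine ⟨i1, ?_⟩
  rw [← integral_add_compl hSm hG, ← setIntegral_congr_set hae,
    integral_image_eq_integral_abs_det_fderiv_smul volume hSm hd hinj G]
  simp only [hdet, smul_eq_mul]

/-- reflected nonlinearity -/
noncomputable def Fh {n p : ℕ} (s l : ℝ) (U : Fin p → Eu n → ℝ) (i : Fin p) (z : Eu n) : ℝ :=
  (l / ‖z‖) ^ (n + 4) * ff s i (fun j => U j (iv l z))

noncomputable def K1 {n : ℕ} (m : ℕ) (y z : Eu n) : ℝ := (‖y - z‖ ^ m)⁻¹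
noncomputable def K2 {n : ℕ} (m : ℕ) (l : ℝ) (y z : Eu n) : ℝ := (l / ‖y‖) ^ m * (‖iv l y - z‖ ^ m)⁻¹

lemma GI.split {n p m : ℕ} {s B κ : ℝ} {U : Fin p → Eu n → ℝ} (h : GI m s B κ U) (i : Fin p) {l : ℝ} (hl : 0 < l)
    {y : Eu n} (hy : y ≠ 0) :
    IntegrableOn (fun z => K1 m y z * ff s i (fun j => U j z)) {z : Eu n | l < ‖z‖} ∧
    IntegrableOn (fun z => K2 m l y z * Fh s l U i z) {z : Eu n | l < ‖z‖} ∧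
    κ * U i y = (∫ z in {z : Eu n | l < ‖z‖}, K1 m y z * ff s i (fun j => U j z)) +
      ∫ z in {z : Eu n | l < ‖z‖}, K2 m l y z * Fh s l U i z := by
  have hn := h.hn
  obtain ⟨a1, a2⟩ := inv_split (by omega) hl (h.int i y)
  have hSm : MeasurableSet {z : Eu n | l < ‖z‖} := measurableSet_lt measurable_const measurable_norm
  have e : Set.EqOn (fun z : Eu n => (l / ‖z‖) ^ (2 * n) * ((‖y - iv l z‖ ^ m)⁻¹ * ff s i (fun j => U j (iv l z))))
      (fun z => K2 m l y z * Fh s l U i z) {z : Eu n | l < ‖z‖} := by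
    intro z hz
    have hz' : 0 < ‖z‖ := hl.trans hz
    have hy' := norm_pos_iff.2 hy
    simp only [K2, Fh]
    rw [norm_sub_iv l hy (norm_pos_iff.1 hz'),
      show (l / ‖z‖) ^ (2 * n) = (l / ‖z‖) ^ m * (l / ‖z‖) ^ (n + 4) by rw [← pow_add]; congr 1; omega]
    rw [mul_pow (‖y‖ / ‖z‖), mul_inv, ← inv_pow (‖y‖ / ‖z‖), inv_div]
    have : (l / ‖z‖) ^ m * (‖z‖ / ‖y‖) ^ m = (l / ‖y‖) ^ m := by
      rw [← mul_pow]; congr 1; field_simp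
    rw [← this]
    ring
  refine ⟨(h.int i y).integrableOn, a1.congr_fun e hSm, ?_⟩
  rw [h.eqn, a2, setIntegral_congr_fun hSm e]
  rfl

lemma GI.diff {n p m : ℕ} {s B κ : ℝ} {U : Fin p → Eu n → ℝ} (h : GI m s B κ U) (i : Fin p) {l : ℝ} (hl : 0 < l)
    {y : Eu n} (hy : y ≠ 0) :
    IntegrableOn (fun z => (K1 m y z - K2 m l y z) * (ff s i (fun j => U j z) - Fh s l U i z)) {z : Eu n | l < ‖z‖} ∧
    κ * (U i y - (l / ‖y‖) ^ m * U i (iv l y)) =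
      ∫ z in {z : Eu n | l < ‖z‖}, (K1 m y z - K2 m l y z) * (ff s i (fun j => U j z) - Fh s l U i z) := by
  have hy' := norm_pos_iff.2 hy
  obtain ⟨a1, a2, a3⟩ := h.split i hl hy
  obtain ⟨b1, b2, b3⟩ := h.split i hl (iv_ne hl hy)
  have e1 : ∀ z : Eu n, K2 m l y z = (l / ‖y‖) ^ m * K1 m (iv l y) z := fun z => rfl
  have e2 : ∀ z : Eu n, K1 m y z = (l / ‖y‖) ^ m * K2 m l (iv l y) z := by
    intro z
    simp only [K1, K2]
    rw [iv_iv hl, norm_iv, ← mul_assoc, ← mul_pow, show l / ‖y‖ * (l / (l ^ 2 / ‖y‖)) = 1 by field_simp, one_pow, one_mul]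
  have b1' : IntegrableOn (fun z => K2 m l y z * ff s i (fun j => U j z)) {z : Eu n | l < ‖z‖} := by
    simp only [e1, mul_assoc]; exact b1.const_mul _
  have b2' : IntegrableOn (fun z => K1 m y z * Fh s l U i z) {z : Eu n | l < ‖z‖} := by
    simp only [e2, mul_assoc]; exact b2.const_mul _
  have b3' : κ * ((l / ‖y‖) ^ m * U i (iv l y)) = (∫ z in {z : Eu n | l < ‖z‖}, K2 m l y z * ff s i (fun j => U j z)) +
      ∫ z in {z : Eu n | l < ‖z‖}, K1 m y z * Fh s l U i z := by
    simp only [e1, e2, mul_assoc]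
    rw [integral_const_mul, integral_const_mul, ← mul_add, ← b3]; ring
  have e3 : (fun z => (K1 m y z - K2 m l y z) * (ff s i (fun j => U j z) - Fh s l U i z)) =
      fun z => ((K1 m y z * ff s i (fun j => U j z) + K2 m l y z * Fh s l U i z) -
        (K2 m l y z * ff s i (fun j => U j z) + K1 m y z * Fh s l U i z)) := by
    ext z; ring
  rw [e3]
  have c1 : IntegrableOn (fun z => K1 m y z * ff s i (fun j => U j z) + K2 m l y z * Fh s l U i z)
      {z : Eu n | l < ‖z‖} := a1.add a2
  have c2 : IntegrableOn (fun z => K2 m l y z * ff s i (fun j => U j z) + K1 m y z * Fh s l U i z)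
      {z : Eu n | l < ‖z‖} := b1'.add b2'
  refine ⟨c1.sub c2, ?_⟩
  rw [integral_sub c1 c2, integral_add a1 a2, integral_add b1' b2', ← a3, ← b3']
  ring

lemma K_bounds {n m : ℕ} (hm : 1 ≤ m) {l : ℝ} (hl : 0 < l) {y z : Eu n} (hy : l < ‖y‖) (hz : l < ‖z‖) (hyz : z ≠ y) :
    0 ≤ K1 m y z - K2 m l y z ∧ K1 m y z - K2 m l y z ≤ (‖y - z‖ ^ m)⁻¹ := by
  have hy' : 0 < ‖y‖ := hl.trans hy
  have h1 := sq_iv hl (norm_pos_iff.1 hy') z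
  have h2 : 0 < ‖y - z‖ := norm_pos_iff.2 (sub_ne_zero.2 hyz.symm)
  have h3 : 0 ≤ (‖y‖ ^ 2 - l ^ 2) * (‖z‖ ^ 2 - l ^ 2) / l ^ 2 := by
    have : 0 ≤ ‖y‖ ^ 2 - l ^ 2 := by nlinarith
    have : 0 ≤ ‖z‖ ^ 2 - l ^ 2 := by nlinarith
    positivity
  have h4 : ‖y - z‖ ≤ ‖y‖ / l * ‖iv l y - z‖ := by
    refine (pow_le_pow_iff_left₀ (norm_nonneg _) (by positivity) two_ne_zero).1 ?_
    linarith
  have e : K2 m l y z = ((‖y‖ / l * ‖iv l y - z‖) ^ m)⁻¹ := by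
    rw [K2, mul_pow, mul_inv, ← inv_pow (‖y‖ / l), inv_div]
  constructor
  · rw [e, K1, sub_nonneg]
    gcongr
  · have : 0 ≤ K2 m l y z := by rw [e]; positivity
    rw [K1]; linarith

lemma kint_loc {n m : ℕ} (hn : n = m + 4) (y : Eu n) (r : ℝ) :
    IntegrableOn (fun z : Eu n => (‖y - z‖ ^ m)⁻¹) (ball 0 r) := by
  have h1 := ((integrable_indicator_iff measurableSet_ball).2 (kint hn (r + ‖y‖))).comp_sub_right y
  refine h1.integrableOn.congr_fun (s := ball (0 : Eu n) r) (fun z hz => ?_) measurableSet_ball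
  have : z - y ∈ ball (0 : Eu n) (r + ‖y‖) := by
    rw [mem_ball, dist_zero_right] at *
    exact (norm_sub_le _ _).trans_lt (by linarith)
  simp only
  rw [Set.indicator_of_mem this, norm_sub_rev]

lemma small_ball {n m : ℕ} (hn : n = m + 4) {η : ℝ} (hη : 0 < η) :
    ∃ r > 0, ∫ z in ball (0 : Eu n) r, (‖z‖ ^ m)⁻¹ ≤ η := by
  set J := ∫ z in ball (0 : Eu n) 1, (‖z‖ ^ m)⁻¹
  have hsc : ∀ r : ℝ, 0 < r → ∫ z in ball (0 : Eu n) r, (‖z‖ ^ m)⁻¹ = r ^ 4 * J := by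
    intro r hr
    have h := Measure.setIntegral_comp_smul_of_pos (volume : Measure (Eu n)) (fun z => (‖z‖ ^ m)⁻¹) (ball 0 1) hr
    rw [_root_.smul_ball hr.ne', smul_zero, mul_one, Real.norm_of_nonneg hr.le, finrank_euclideanSpace_fin, smul_eq_mul] at h
    simp only [norm_smul, Real.norm_of_nonneg hr.le, mul_pow, mul_inv] at h
    rw [integral_const_mul, eq_inv_mul_iff_mul_eq₀ (by positivity)] at h
    rw [← h, show r ^ n = r ^ 4 * r ^ m by rw [hn, pow_add, mul_comm]]
    have : 0 < r ^ m := by positivity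
    change r ^ 4 * r ^ m * ((r ^ m)⁻¹ * J) = r ^ 4 * J
    field_simp
  have h1 : Tendsto (fun r : ℝ => r ^ 4 * J) (𝓝[>] 0) (𝓝 0) := by
    have := (by fun_prop : Continuous fun r : ℝ => r ^ 4 * J).tendsto 0
    simp only [ne_eq, OfNat.ofNat_ne_zero, not_false_eq_true, zero_pow, zero_mul] at this
    exact this.mono_left nhdsWithin_le_nhds
  obtain ⟨r, hr, hr0⟩ := ((h1.eventually (gt_mem_nhds hη)).and self_mem_nhdsWithin).exists
  exact ⟨r, hr0, by rw [hsc r hr0]; exact hr.le⟩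

lemma narrow_meas {n m : ℕ} (hn : n = m + 4) {l0 η : ℝ} (hl0 : 0 ≤ l0) (hη : 0 < η) :
    ∃ δ > 0, ∀ l ≥ l0, ∀ ρ ≤ l0 + δ, ∀ y : Eu n,
      ∫ z in {z : Eu n | l < ‖z‖} ∩ ball 0 ρ, (‖y - z‖ ^ m)⁻¹ ≤ η := by
  have hne : Nonempty (Fin n) := ⟨⟨0, by omega⟩⟩
  obtain ⟨r, hr, hrη⟩ := small_ball (n := n) hn (half_pos hη)
  set c := (volume : Measure (Eu n)).real (ball 0 1)
  have hvol : ∀ δ : ℝ, 0 ≤ δ → (volume : Measure (Eu n)).real (ball 0 (l0 + δ) \ ball 0 l0) = ((l0 + δ) ^ n - l0 ^ n) * c := by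
    intro δ hδ
    rw [measureReal_sdiff (ball_subset_ball (by linarith)) measurableSet_ball measure_ball_lt_top.ne]
    have : ∀ a : ℝ, 0 ≤ a → (volume : Measure (Eu n)).real (ball 0 a) = a ^ n * c := by
      intro a ha
      rw [measureReal_def, Measure.addHaar_ball _ _ ha, finrank_euclideanSpace_fin, ENNReal.toReal_mul,
        ENNReal.toReal_ofReal (by positivity)]
      rfl
    rw [this _ (by linarith), this _ hl0]; ring
  have h1 : Tendsto (fun δ : ℝ => (r ^ m)⁻¹ * (((l0 + δ) ^ n - l0 ^ n) * c)) (𝓝[>] 0) (𝓝 0) := by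
    have := (by fun_prop : Continuous fun δ : ℝ => (r ^ m)⁻¹ * (((l0 + δ) ^ n - l0 ^ n) * c)).tendsto 0
    simp only [add_zero, sub_self, zero_mul, mul_zero] at this
    exact this.mono_left nhdsWithin_le_nhds
  obtain ⟨δ, hδ, hδ0⟩ := ((h1.eventually (gt_mem_nhds (half_pos hη))).and self_mem_nhdsWithin).exists
  have hδ0 : 0 < δ := hδ0
  refine ⟨δ, hδ0, fun l hl ρ hρ y => ?_⟩
  have hSm : MeasurableSet {z : Eu n | l < ‖z‖} := measurableSet_lt measurable_const measurable_norm
  set T := {z : Eu n | l < ‖z‖} ∩ ball 0 ρ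
  have hTm : MeasurableSet T := hSm.inter measurableSet_ball
  set A := ball (0 : Eu n) (l0 + δ) \ ball 0 l0 with hA
  have hAm : MeasurableSet A := measurableSet_ball.diff measurableSet_ball
  have hTA : T ⊆ A := by
    rintro z ⟨hz1, hz2⟩
    have hz1 : l < ‖z‖ := hz1
    rw [mem_ball, dist_zero_right] at hz2
    refine ⟨?_, ?_⟩
    · rw [mem_ball, dist_zero_right]; linarith
    · rw [mem_ball, dist_zero_right, not_lt]; linarith
  have i0 : Integrable ((ball (0 : Eu n) r).indicator fun z => (‖z‖ ^ m)⁻¹) :=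
    (integrable_indicator_iff measurableSet_ball).2 (kint hn r)
  have i1 : Integrable fun z => (ball (0 : Eu n) r).indicator (fun z => (‖z‖ ^ m)⁻¹) (z - y) := i0.comp_sub_right y
  have i2 : Integrable (A.indicator fun _ : Eu n => (r ^ m)⁻¹) := by
    rw [integrable_indicator_iff hAm]
    exact integrableOn_const ((measure_mono Set.sdiff_subset).trans_lt measure_ball_lt_top).ne
  rw [← integral_indicator hTm]
  calc ∫ z, T.indicator (fun z => (‖y - z‖ ^ m)⁻¹) z
      ≤ ∫ z, ((ball (0 : Eu n) r).indicator (fun z => (‖z‖ ^ m)⁻¹) (z - y) + A.indicator (fun _ : Eu n => (r ^ m)⁻¹) z) := by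
        refine integral_mono ?_ (i1.add i2) ?_
        · rw [integrable_indicator_iff hTm]
          exact (kint_loc hn y ρ).mono_set Set.inter_subset_right
        · intro z
          have p1 : 0 ≤ (ball (0 : Eu n) r).indicator (fun z => (‖z‖ ^ m)⁻¹) (z - y) :=
            Set.indicator_nonneg (fun _ _ => by positivity) _
          have p2 : 0 ≤ A.indicator (fun _ : Eu n => (r ^ m)⁻¹) z := Set.indicator_nonneg (fun _ _ => by positivity) _
          simp only
          by_cases hz : z ∈ T
          · rw [Set.indicator_of_mem hz, Set.indicator_of_mem (hTA hz)] at *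
            by_cases hb : z - y ∈ ball (0 : Eu n) r
            · rw [Set.indicator_of_mem hb] at *
              rw [norm_sub_rev]; linarith
            · rw [Set.indicator_of_notMem hb] at *
              rw [mem_ball, dist_zero_right, not_lt] at hb
              rw [norm_sub_rev, zero_add]
              gcongr
          · rw [Set.indicator_of_notMem hz]
            exact add_nonneg p1 p2
    _ = (∫ z in ball (0 : Eu n) r, (‖z‖ ^ m)⁻¹) + (r ^ m)⁻¹ * (((l0 + δ) ^ n - l0 ^ n) * c) := by
        rw [integral_add i1 i2, integral_sub_right_eq_self, integral_indicator measurableSet_ball,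
          integral_indicator hAm, setIntegral_const, hvol δ hδ0.le, smul_eq_mul, mul_comm (((l0 + δ) ^ n - l0 ^ n) * c)]
    _ ≤ η := by linarith

noncomputable def Ul {n : ℕ} (m : ℕ) (l : ℝ) (u : Eu n → ℝ) (y : Eu n) : ℝ := (l / ‖y‖) ^ m * u (iv l y)

lemma Fh_eq {n p m : ℕ} {s l : ℝ} (U : Fin p → Eu n → ℝ) (hl : 0 < l) (i : Fin p) {z : Eu n} (hz : z ≠ 0) :
    Fh s l U i z = (l / ‖z‖) ^ ((n : ℝ) + 4 - m * s) * ff s i (fun j => Ul m l (U j) z) := by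
  have hz' := norm_pos_iff.2 hz
  have hq : 0 < l / ‖z‖ := by positivity
  unfold Ul Fh
  rw [ff_smul (pow_pos hq m), ← mul_assoc]
  congr 1
  rw [← Real.rpow_natCast (l / ‖z‖) m, ← Real.rpow_mul hq.le, ← Real.rpow_add hq, ← Real.rpow_natCast]
  congr 1
  push_cast; ring

lemma Ul_nonneg {n m : ℕ} {l : ℝ} (hl : 0 < l) {u : Eu n → ℝ} (hu : ∀ x, 0 ≤ u x) (y : Eu n) : 0 ≤ Ul m l u y :=
  mul_nonneg (by positivity) (hu _)

lemma Ul_le {n m : ℕ} {l B : ℝ} (hl : 0 < l) {u : Eu n → ℝ} (hu : ∀ x, 0 ≤ u x) (hB : ∀ x, u x ≤ B)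
    {y : Eu n} (hy : l < ‖y‖) : Ul m l u y ≤ B := by
  have hy' : 0 < ‖y‖ := hl.trans hy
  have : (l / ‖y‖) ^ m ≤ 1 := pow_le_one₀ (by positivity) ((div_le_one hy').2 hy.le)
  exact (mul_le_of_le_one_left (hu _) this).trans (hB _)

lemma Fh_le {n p m : ℕ} {s l : ℝ} {U : Fin p → Eu n → ℝ} (hU : ∀ i x, 0 ≤ U i x) (hτ : (m : ℝ) * s < n + 4)
    (hl : 0 < l) (i : Fin p) {z : Eu n} (hz : l < ‖z‖) :
    Fh s l U i z ≤ ff s i (fun j => Ul m l (U j) z) := by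
  have hz' : 0 < ‖z‖ := hl.trans hz
  rw [Fh_eq (m := m) U hl i (norm_pos_iff.1 hz')]
  refine mul_le_of_le_one_left (ff_nonneg s i (Ul_nonneg hl (hU i) z)) ?_
  exact Real.rpow_le_one (by positivity) ((div_le_one hz').2 hz.le) (by linarith)

lemma GI.B_nn {n p m : ℕ} {s B κ : ℝ} {U : Fin p → Eu n → ℝ} (h : GI m s B κ U) (i : Fin p) : 0 ≤ B :=
  (h.nn i 0).trans (h.bd i 0)

lemma GI.half {n p m : ℕ} {s B κ : ℝ} {U : Fin p → Eu n → ℝ} (h : GI m s B κ U) (hτ : (m : ℝ) * s < n + 4)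
    {l ρ L W : ℝ} (hl : 0 < l) (hL : L = (p * B) ^ (s - 1) * (1 + s * p))
    (Hρ : ∀ i (y : Eu n), l < ‖y‖ → ρ ≤ ‖y‖ → Ul m l (U i) y ≤ U i y)
    (hN : ∀ y : Eu n, L * ∫ z in {z : Eu n | l < ‖z‖} ∩ ball 0 ρ, (‖y - z‖ ^ m)⁻¹ ≤ κ / 2)
    (hW : 0 ≤ W) (H : ∀ i (y : Eu n), l < ‖y‖ → Ul m l (U i) y ≤ U i y + W) :
    ∀ i (y : Eu n), l < ‖y‖ → Ul m l (U i) y ≤ U i y + W / 2 := by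
  intro i y hy
  have hn := h.hn
  have hne : Nonempty (Fin n) := ⟨⟨0, by omega⟩⟩
  have hs := h.hs
  have hκ := h.hκ
  have hy' : 0 < ‖y‖ := hl.trans hy
  have hB := h.B_nn i
  have hL0 : 0 ≤ L := by rw [hL]; positivity
  obtain ⟨d1, d2⟩ := h.diff i hl (norm_pos_iff.1 hy')
  set S := {z : Eu n | l < ‖z‖} with hS
  have hSm : MeasurableSet S := measurableSet_lt measurable_const measurable_norm
  have key : ∫ z in S, (ball (0 : Eu n) ρ).indicator (fun z => -(L * W) * (‖y - z‖ ^ m)⁻¹) z ≤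
      ∫ z in S, (K1 m y z - K2 m l y z) * (ff s i (fun j => U j z) - Fh s l U i z) := by
    refine integral_mono_ae ?_ d1 ?_
    · have : Integrable ((ball (0 : Eu n) ρ).indicator (fun z => -(L * W) * (‖y - z‖ ^ m)⁻¹)) := by
        rw [integrable_indicator_iff measurableSet_ball]
        exact (kint_loc hn y ρ).const_mul _
      exact this.integrableOn
    · have hyae : ∀ᵐ z : Eu n ∂(volume.restrict S), z ≠ y := by
        refine ae_restrict_of_ae ?_
        rw [ae_iff]; simp
      filter_upwards [hyae, ae_restrict_mem hSm] with z hzy hz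
      have hz : l < ‖z‖ := hz
      obtain ⟨k1, k2⟩ := K_bounds h.hm hl hy hz hzy
      have hF := Fh_le h.nn hτ hl i hz
      by_cases hb : z ∈ ball (0 : Eu n) ρ
      · rw [Set.indicator_of_mem hb]
        have e1 : ff s i (fun j => Ul m l (U j) z) ≤ ff s i (fun j => max (U j z) (Ul m l (U j) z)) :=
          ff_mono hs i (fun j => Ul_nonneg hl (h.nn j) z) (fun j => le_max_right _ _)
        have e2 := ff_lip (M := p * B) hs hW i (v := fun j => U j z)
          (w := fun j => max (U j z) (Ul m l (U j) z)) (fun j => h.nn j z) (fun j => le_max_left _ _)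
          (fun j => max_le (by linarith) (H j z hz)) (vn_le_card fun j => by
            rw [abs_of_nonneg ((h.nn j z).trans (le_max_left _ _))]
            exact max_le (h.bd j z) (Ul_le hl (h.nn j) (h.bd j) hz))
        rw [← hL] at e2
        have e3 : -(L * W) ≤ ff s i (fun j => U j z) - Fh s l U i z := by linarith
        have e4 : 0 ≤ L * W := mul_nonneg hL0 hW
        calc -(L * W) * (‖y - z‖ ^ m)⁻¹ ≤ -(L * W) * (K1 m y z - K2 m l y z) :=
              mul_le_mul_of_nonpos_left k2 (by linarith)
          _ = (K1 m y z - K2 m l y z) * -(L * W) := by ring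
          _ ≤ _ := mul_le_mul_of_nonneg_left e3 k1
      · rw [Set.indicator_of_notMem hb]
        rw [mem_ball, dist_zero_right, not_lt] at hb
        have : ff s i (fun j => Ul m l (U j) z) ≤ ff s i (fun j => U j z) := by
          refine ff_mono hs i (fun j => Ul_nonneg hl (h.nn j) z) (fun j => Hρ j z hz hb)
        exact mul_nonneg k1 (by linarith)
  rw [setIntegral_indicator measurableSet_ball, integral_const_mul, ← d2] at key
  have h3 := hN y
  change κ * (U i y - Ul m l (U i) y) ≥ _ at key
  set I := ∫ z in S ∩ ball 0 ρ, (‖y - z‖ ^ m)⁻¹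
  have h4 : L * I * W ≤ κ / 2 * W := mul_le_mul_of_nonneg_right h3 hW
  have h5 : κ * (U i y - Ul m l (U i) y + W / 2) ≥ κ * 0 := by nlinarith
  have := le_of_mul_le_mul_left h5 hκ
  linarith

lemma GI.narrow {n p m : ℕ} {s B κ : ℝ} {U : Fin p → Eu n → ℝ} (h : GI m s B κ U) (hτ : (m : ℝ) * s < n + 4)
    {l ρ L : ℝ} (hl : 0 < l) (hL : L = (p * B) ^ (s - 1) * (1 + s * p))
    (Hρ : ∀ i (y : Eu n), l < ‖y‖ → ρ ≤ ‖y‖ → Ul m l (U i) y ≤ U i y)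
    (hN : ∀ y : Eu n, L * ∫ z in {z : Eu n | l < ‖z‖} ∩ ball 0 ρ, (‖y - z‖ ^ m)⁻¹ ≤ κ / 2) :
    ∀ i (y : Eu n), l < ‖y‖ → Ul m l (U i) y ≤ U i y := by
  intro i y hy
  have hB := h.B_nn i
  have H : ∀ k : ℕ, ∀ i (y : Eu n), l < ‖y‖ → Ul m l (U i) y ≤ U i y + B / 2 ^ k := by
    intro k
    induction k with
    | zero => intro i y hy; have := Ul_le (m := m) hl (h.nn i) (h.bd i) hy; have := h.nn i y; simp; linarith
    | succ k ih =>
      have := h.half hτ hl hL Hρ hN (by positivity) ih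
      intro i y hy
      rw [pow_succ, ← div_div]; exact this i y hy
  have t : Tendsto (fun k : ℕ => U i y + B / 2 ^ k) atTop (𝓝 (U i y + 0)) := by
    refine tendsto_const_nhds.add ?_
    have := (tendsto_pow_atTop_nhds_zero_of_lt_one (r := (1/2 : ℝ)) (by norm_num) (by norm_num)).const_mul B
    simpa [div_eq_mul_inv] using this
  have := ge_of_tendsto' t (fun k => H k i y hy)
  linarith

def PP {n p : ℕ} (m : ℕ) (U : Fin p → Eu n → ℝ) (l : ℝ) : Prop :=
  ∀ i (y : Eu n), l < ‖y‖ → Ul m l (U i) y ≤ U i y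

lemma unif_near {n m : ℕ} {u : Eu n → ℝ} (hu : Continuous u) {l0 r c : ℝ} (hr : 0 < r) (hc : 0 < c) :
    ∀ᶠ l in 𝓝 l0, ∀ y : Eu n, r ≤ ‖y‖ → l ^ m * u (iv l y) ≤ l0 ^ m * u (iv l0 y) + c := by
  have hK : IsCompact (closedBall (0 : Eu n) r⁻¹) := isCompact_closedBall _ _
  have h1 : ∀ᶠ l in 𝓝 l0, ∀ θ ∈ closedBall (0 : Eu n) r⁻¹, l ^ m * u (l ^ 2 • θ) - l0 ^ m * u (l0 ^ 2 • θ) < c := by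
    refine hK.eventually_forall_of_forall_eventually fun θ _ => ?_
    have hct : Continuous fun q : ℝ × Eu n => q.1 ^ m * u (q.1 ^ 2 • q.2) - l0 ^ m * u (l0 ^ 2 • q.2) := by fun_prop
    have := hct.tendsto (l0, θ)
    simp only [sub_self] at this
    exact this.eventually (gt_mem_nhds hc)
  filter_upwards [h1] with l hl y hy
  have hy0 : 0 < ‖y‖ := hr.trans_le hy
  have e : ∀ t : ℝ, iv t y = t ^ 2 • ((‖y‖ ^ 2)⁻¹ • y) := fun t => by
    rw [iv, smul_smul, div_pow, div_eq_mul_inv]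
  have := hl ((‖y‖ ^ 2)⁻¹ • y) (by
    rw [mem_closedBall, dist_zero_right, norm_smul, norm_inv, norm_pow, norm_norm]
    have : (‖y‖ ^ 2)⁻¹ * ‖y‖ = ‖y‖⁻¹ := by field_simp
    rw [this]; gcongr)
  rw [e, e]; linarith

lemma GI.step {n p m : ℕ} {s B κ : ℝ} {U : Fin p → Eu n → ℝ} (h : GI m s B κ U) (hτ : (m : ℝ) * s < n + 4)
    {l0 : ℝ} (hl0 : 0 ≤ l0)
    (Hc : ∀ i, (∃ x, U i x ≠ 0) → ∀ δ > 0, ∃ c > 0, ∀ y : Eu n, l0 + δ ≤ ‖y‖ →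
      l0 ^ m * U i (iv l0 y) + c ≤ ‖y‖ ^ m * U i y) :
    ∀ᶠ l in 𝓝[>] l0, PP m U l := by
  by_cases hp : Nonempty (Fin p)
  swap
  · exact Eventually.of_forall fun l i => (hp ⟨i⟩).elim
  obtain ⟨i0⟩ := hp
  have hB := h.B_nn i0
  have hs := h.hs
  have hκ := h.hκ
  set L : ℝ := (p * B) ^ (s - 1) * (1 + s * p) with hL
  have hL0 : 0 ≤ L := by positivity
  obtain ⟨δ, hδ, hm⟩ := narrow_meas h.hn hl0 (η := κ / (2 * (L + 1))) (by positivity)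
  have h1 : ∀ᶠ l in 𝓝[>] l0, ∀ i, ∀ y : Eu n, l0 + δ ≤ ‖y‖ → Ul m l (U i) y ≤ U i y := by
    rw [eventually_all]
    intro i
    by_cases hi : ∃ x, U i x ≠ 0
    · obtain ⟨c, hc, hcy⟩ := Hc i hi δ hδ
      filter_upwards [nhdsWithin_le_nhds (unif_near (m := m) (h.cont i) (l0 := l0) (r := l0 + δ) (by linarith) hc)] with l hl y hy
      have a := hl y hy
      have b := hcy y hy
      have hy0 : 0 < ‖y‖ := by linarith
      rw [Ul, div_pow, div_mul_eq_mul_div, div_le_iff₀ (by positivity)]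
      linarith
    · push Not at hi
      exact Eventually.of_forall fun l y _ => by simp [Ul, hi]
  filter_upwards [h1, self_mem_nhdsWithin] with l hl hll
  have hll : l0 < l := hll
  refine h.narrow hτ (by linarith) hL (ρ := l0 + δ) (fun i y _ hy => hl i y hy) fun y => ?_
  calc L * _ ≤ L * (κ / (2 * (L + 1))) := mul_le_mul_of_nonneg_left (hm l hll.le _ le_rfl y) hL0
    _ ≤ κ / 2 := by
      rw [mul_div_assoc', div_le_div_iff₀ (by positivity) (by positivity)]
      nlinarith

lemma GI.F_low {n p m : ℕ} {s B κ : ℝ} {U : Fin p → Eu n → ℝ} (h : GI m s B κ U) (i : Fin p)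
    (hi : ∃ x, U i x ≠ 0) {r : ℝ} (hr : 0 ≤ r) :
    ∃ c > 0, ∀ z ∈ closedBall (0 : Eu n) r, c ≤ ff s i (fun j => U j z) := by
  obtain ⟨x0, hx0⟩ := hi
  obtain ⟨z0, _, hz⟩ := (isCompact_closedBall (0 : Eu n) r).exists_isMinOn ⟨0, by simpa using hr⟩ (h.F_cont i).continuousOn
  refine ⟨_, lt_of_le_of_ne (h.F_nn i z0) fun h0 => ?_, fun z hz' => hz hz'⟩
  have := ff_eq_zero i h0.symm
  exact (h.pos i hx0 z0).ne' this

lemma GI.start {n p m : ℕ} {s B κ : ℝ} {U : Fin p → Eu n → ℝ} (h : GI m s B κ U) (i : Fin p)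
    (hi : ∃ x, U i x ≠ 0) {δ : ℝ} (hδ : 0 < δ) :
    ∃ c > 0, ∀ y : Eu n, 0 + δ ≤ ‖y‖ → 0 ^ m * U i (iv 0 y) + c ≤ ‖y‖ ^ m * U i y := by
  have hne : Nonempty (Fin n) := ⟨⟨0, by have := h.hn; omega⟩⟩
  have hκ := h.hκ
  obtain ⟨c, hc, hcz⟩ := h.F_low i hi hδ.le
  set v := (volume : Measure (Eu n)).real (ball 0 δ)
  have hv : 0 < v := ENNReal.toReal_pos (measure_ball_pos _ _ hδ).ne' measure_ball_lt_top.ne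
  refine ⟨v * c * (2 ^ m)⁻¹ * κ⁻¹, by positivity, fun y hy => ?_⟩
  rw [zero_add] at hy
  have hy0 : 0 < ‖y‖ := hδ.trans_le hy
  have h1 : ∫ z in ball (0 : Eu n) δ, ((2 * ‖y‖) ^ m)⁻¹ * c ≤ ∫ z in ball (0 : Eu n) δ, (‖y - z‖ ^ m)⁻¹ * ff s i (fun j => U j z) := by
    refine integral_mono_ae (integrableOn_const measure_ball_lt_top.ne) (h.int i y).integrableOn ?_
    have hyae : ∀ᵐ z : Eu n ∂(volume.restrict (ball (0 : Eu n) δ)), z ≠ y := by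
      refine ae_restrict_of_ae ?_
      rw [ae_iff]; simp
    filter_upwards [hyae, ae_restrict_mem measurableSet_ball] with z hzy hz
    have hz2 := hcz z (ball_subset_closedBall hz)
    rw [mem_ball, dist_zero_right] at hz
    have : 0 < ‖y - z‖ := norm_pos_iff.2 (sub_ne_zero.2 hzy.symm)
    have : ‖y - z‖ ≤ 2 * ‖y‖ := (norm_sub_le _ _).trans (by linarith)
    gcongr
  have h2 : ∫ z in ball (0 : Eu n) δ, (‖y - z‖ ^ m)⁻¹ * ff s i (fun j => U j z) ≤ κ * U i y := by
    rw [h.eqn]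
    exact setIntegral_le_integral (h.int i y) (Eventually.of_forall fun z => mul_nonneg (by positivity) (h.F_nn i z))
  rw [setIntegral_const, smul_eq_mul] at h1
  rw [zero_pow (by have := h.hm; omega), zero_mul, zero_add]
  have h3 := h1.trans h2
  have h4 : ‖y‖ ^ m * κ⁻¹ * (v * (((2 * ‖y‖) ^ m)⁻¹ * c)) ≤ ‖y‖ ^ m * κ⁻¹ * (κ * U i y) := by gcongr
  calc v * c * (2 ^ m)⁻¹ * κ⁻¹ = ‖y‖ ^ m * κ⁻¹ * (v * (((2 * ‖y‖) ^ m)⁻¹ * c)) := by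
        rw [mul_pow, mul_inv]
        have : ‖y‖ ^ m ≠ 0 := by positivity
        field_simp
    _ ≤ _ := h4
    _ = _ := by field_simp

lemma K_low {n m : ℕ} {l δ q : ℝ} (hl : 0 < l) (hδ : 0 < δ) (hq1 : 1 < q)
    (hq : q ^ 2 = 1 + 3 * (1 - (l / (l + δ)) ^ 2) / 16)
    {y z : Eu n} (hy : l + δ ≤ ‖y‖) (hz : 2 * l < ‖z‖) (hz2 : ‖z‖ < 3 * l) (hyz : z ≠ y) :
    ((4 * ‖y‖) ^ m)⁻¹ * (1 - (q ^ m)⁻¹) ≤ K1 m y z - K2 m l y z := by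
  have hy' : 0 < ‖y‖ := by linarith
  have h1 := sq_iv hl (norm_pos_iff.1 hy') z
  have h2 : 0 < ‖y - z‖ := norm_pos_iff.2 (sub_ne_zero.2 hyz.symm)
  have h2' : ‖y - z‖ ≤ 4 * ‖y‖ := (norm_sub_le _ _).trans (by linarith)
  have h3 : 3 * (‖y‖ ^ 2 - l ^ 2) ≤ (‖y‖ ^ 2 - l ^ 2) * (‖z‖ ^ 2 - l ^ 2) / l ^ 2 := by
    rw [le_div_iff₀ (by positivity)]
    have a1 : 0 ≤ ‖y‖ ^ 2 - l ^ 2 := by nlinarith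
    have a2 : 3 * l ^ 2 ≤ ‖z‖ ^ 2 - l ^ 2 := by nlinarith
    nlinarith
  have h5 : l ^ 2 ≤ (l / (l + δ)) ^ 2 * ‖y‖ ^ 2 := by
    have : l ≤ l / (l + δ) * ‖y‖ := by
      rw [div_mul_eq_mul_div, le_div_iff₀ (by positivity)]
      exact mul_le_mul_of_nonneg_left hy hl.le
    rw [← mul_pow]; gcongr
  have h6 : (q * ‖y - z‖) ^ 2 ≤ (‖y‖ / l * ‖iv l y - z‖) ^ 2 := by
    rw [h1, mul_pow, hq]
    set c := (l / (l + δ)) ^ 2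
    have hc : c ≤ 1 := by
      refine pow_le_one₀ (by positivity) ((div_le_one (by positivity)).2 (by linarith))
    have : ‖y - z‖ ^ 2 ≤ 16 * ‖y‖ ^ 2 := by
      calc ‖y - z‖ ^ 2 ≤ (4 * ‖y‖) ^ 2 := by gcongr
        _ = _ := by ring
    nlinarith
  have h4 : q * ‖y - z‖ ≤ ‖y‖ / l * ‖iv l y - z‖ :=
    (pow_le_pow_iff_left₀ (by positivity) (by positivity) two_ne_zero).1 h6
  have e : K2 m l y z = ((‖y‖ / l * ‖iv l y - z‖) ^ m)⁻¹ := by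
    rw [K2, mul_pow, mul_inv, ← inv_pow (‖y‖ / l), inv_div]
  have h7 : K2 m l y z ≤ ((q * ‖y - z‖) ^ m)⁻¹ := by
    rw [e]; gcongr
  have h8 : (q ^ m)⁻¹ ≤ 1 := inv_le_one_of_one_le₀ (one_le_pow₀ hq1.le)
  calc ((4 * ‖y‖) ^ m)⁻¹ * (1 - (q ^ m)⁻¹) ≤ (‖y - z‖ ^ m)⁻¹ * (1 - (q ^ m)⁻¹) := by
        apply mul_le_mul_of_nonneg_right _ (by linarith)
        gcongr
    _ = K1 m y z - ((q * ‖y - z‖) ^ m)⁻¹ := by rw [K1, mul_pow, mul_inv]; ring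
    _ ≤ _ := by linarith

lemma GI.contn {n p m : ℕ} {s B κ : ℝ} {U : Fin p → Eu n → ℝ} (h : GI m s B κ U) (hτ : (m : ℝ) * s < n + 4)
    {l : ℝ} (hl : 0 < l) (hP : PP m U l) (i : Fin p)
    (hi : ∃ x, U i x ≠ 0) {δ : ℝ} (hδ : 0 < δ) :
    ∃ c > 0, ∀ y : Eu n, l + δ ≤ ‖y‖ → l ^ m * U i (iv l y) + c ≤ ‖y‖ ^ m * U i y := by
  have hne : Nonempty (Fin n) := ⟨⟨0, by have := h.hn; omega⟩⟩
  have hκ := h.hκ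
  have hm := h.hm
  obtain ⟨c, hc, hcz⟩ := h.F_low i hi (r := 3 * l) (by positivity)
  set A : Set (Eu n) := ball 0 (3 * l) ∩ {z | 2 * l < ‖z‖} with hA
  have hAo : IsOpen A := isOpen_ball.inter (isOpen_lt continuous_const continuous_norm)
  have hAf : (volume : Measure (Eu n)) A < ⊤ := (measure_mono Set.inter_subset_left).trans_lt measure_ball_lt_top
  have hAne : A.Nonempty := by
    have e : ‖(EuclideanSpace.single (Classical.arbitrary (Fin n)) (5 / 2 * l) : Eu n)‖ = 5 / 2 * l := by
      rw [EuclideanSpace.norm_single, Real.norm_of_nonneg (by positivity)]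
    refine ⟨EuclideanSpace.single (Classical.arbitrary (Fin n)) (5 / 2 * l), ?_, ?_⟩
    · rw [mem_ball, dist_zero_right, e]; linarith
    · rw [Set.mem_ofPred_eq, e]; linarith
  set v := (volume : Measure (Eu n)).real A
  have hv : 0 < v := ENNReal.toReal_pos (hAo.measure_pos _ hAne).ne' hAf.ne
  set q := Real.sqrt (1 + 3 * (1 - (l / (l + δ)) ^ 2) / 16) with hqd
  have hc1 : (l / (l + δ)) ^ 2 < 1 :=
    pow_lt_one₀ (by positivity) ((div_lt_one (by positivity)).2 (by linarith)) two_ne_zero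
  have hq2 : q ^ 2 = 1 + 3 * (1 - (l / (l + δ)) ^ 2) / 16 := Real.sq_sqrt (by linarith)
  have hq1 : 1 < q := by rw [hqd, Real.lt_sqrt (by norm_num)]; linarith
  set τ : ℝ := (n : ℝ) + 4 - m * s with hτd
  have hτ0 : 0 < τ := by rw [hτd]; linarith
  set a := 1 - (1 / 2 : ℝ) ^ τ
  have ha : 0 < a := sub_pos.2 (Real.rpow_lt_one (by norm_num) (by norm_num) hτ0)
  set b := 1 - (q ^ m)⁻¹
  have hb : 0 < b := sub_pos.2 (inv_lt_one_of_one_lt₀ (one_lt_pow₀ hq1 (by omega)))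
  refine ⟨v * c * a * b * (4 ^ m)⁻¹ * κ⁻¹, by positivity, fun y hy => ?_⟩
  have hy0 : 0 < ‖y‖ := by linarith
  have hly : l < ‖y‖ := by linarith
  obtain ⟨d1, d2⟩ := h.diff i hl (norm_pos_iff.1 hy0)
  set S := {z : Eu n | l < ‖z‖} with hS
  have hSm : MeasurableSet S := measurableSet_lt measurable_const measurable_norm
  have hAS : A ⊆ S := by
    rintro z ⟨_, hz⟩
    have hz : 2 * l < ‖z‖ := hz
    change l < ‖z‖
    linarith
  have hyae : ∀ᵐ z : Eu n, z ≠ y := by rw [ae_iff]; simp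
  have h1 : ∫ z in A, ((4 * ‖y‖) ^ m)⁻¹ * b * (a * c) ≤
      ∫ z in A, (K1 m y z - K2 m l y z) * (ff s i (fun j => U j z) - Fh s l U i z) := by
    refine integral_mono_ae (integrableOn_const hAf.ne) (d1.mono_set hAS) ?_
    filter_upwards [ae_restrict_of_ae hyae, ae_restrict_mem hAo.measurableSet] with z hzy hz
    have hzl : l < ‖z‖ := hAS hz
    have hz0 : 0 < ‖z‖ := hl.trans hzl
    have hz1 := hz.1
    have hz2 : 2 * l < ‖z‖ := hz.2
    have hFc := hcz z (ball_subset_closedBall hz1)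
    rw [mem_ball, dist_zero_right] at hz1
    have k := K_low (m := m) hl hδ hq1 hq2 hy hz2 hz1 hzy
    have f1 : Fh s l U i z ≤ (1 / 2 : ℝ) ^ τ * ff s i (fun j => U j z) := by
      rw [Fh_eq (m := m) U hl i (norm_pos_iff.1 hz0), ← hτd]
      have g1 : (l / ‖z‖) ^ τ ≤ (1 / 2 : ℝ) ^ τ := by
        refine Real.rpow_le_rpow (by positivity) ?_ hτ0.le
        rw [div_le_div_iff₀ hz0 (by norm_num)]; linarith
      have g2 : ff s i (fun j => Ul m l (U j) z) ≤ ff s i (fun j => U j z) :=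
        ff_mono h.hs i (fun j => Ul_nonneg hl (h.nn j) z) (fun j => hP j z hzl)
      exact mul_le_mul g1 g2 (ff_nonneg s i (Ul_nonneg hl (h.nn i) z)) (by positivity)
    have f2 : a * c ≤ ff s i (fun j => U j z) - Fh s l U i z := by
      have : a * c ≤ a * ff s i (fun j => U j z) := by gcongr
      have e : a * ff s i (fun j => U j z) = ff s i (fun j => U j z) - (1 / 2 : ℝ) ^ τ * ff s i (fun j => U j z) := by ring
      linarith
    exact mul_le_mul k f2 (by positivity) (le_trans (by positivity) k)
  have h2 : ∫ z in A, (K1 m y z - K2 m l y z) * (ff s i (fun j => U j z) - Fh s l U i z) ≤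
      κ * (U i y - (l / ‖y‖) ^ m * U i (iv l y)) := by
    rw [d2]
    refine setIntegral_mono_set d1 ?_ (Eventually.of_forall hAS)
    filter_upwards [ae_restrict_of_ae hyae, ae_restrict_mem hSm] with z hzy hz
    have hz : l < ‖z‖ := hz
    have g1 := Fh_le h.nn hτ hl i hz
    have g2 : ff s i (fun j => Ul m l (U j) z) ≤ ff s i (fun j => U j z) :=
        ff_mono h.hs i (fun j => Ul_nonneg hl (h.nn j) z) (fun j => hP j z hz)
    exact mul_nonneg (K_bounds hm hl hly hz hzy).1 (by linarith)
  rw [setIntegral_const, smul_eq_mul] at h1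
  have h3 := h1.trans h2
  have h4 : ‖y‖ ^ m * κ⁻¹ * (v * (((4 * ‖y‖) ^ m)⁻¹ * b * (a * c))) ≤
      ‖y‖ ^ m * κ⁻¹ * (κ * (U i y - (l / ‖y‖) ^ m * U i (iv l y))) := by gcongr
  have e1 : v * c * a * b * (4 ^ m)⁻¹ * κ⁻¹ = ‖y‖ ^ m * κ⁻¹ * (v * (((4 * ‖y‖) ^ m)⁻¹ * b * (a * c))) := by
    rw [mul_pow, mul_inv]
    have : ‖y‖ ^ m ≠ 0 := by positivity
    field_simp
  have e2 : ‖y‖ ^ m * κ⁻¹ * (κ * (U i y - (l / ‖y‖) ^ m * U i (iv l y))) = ‖y‖ ^ m * U i y - l ^ m * U i (iv l y) := by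
    rw [div_pow]
    have : ‖y‖ ^ m ≠ 0 := by positivity
    field_simp
  linarith

lemma GI.allPP {n p m : ℕ} {s B κ : ℝ} {U : Fin p → Eu n → ℝ} (h : GI m s B κ U) (hτ : (m : ℝ) * s < n + 4)
    {l : ℝ} (hl : 0 < l) : PP m U l := by
  by_contra hbad
  set D : Set ℝ := {l | 0 < l ∧ ¬ PP m U l} with hD
  have hDne : D.Nonempty := ⟨l, hl, hbad⟩
  have hDb : BddBelow D := ⟨0, fun x hx => hx.1.le⟩
  set l1 := sInf D with hl1
  have h0 : 0 ≤ l1 := le_csInf hDne fun x hx => hx.1.le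
  have hlt : ∀ x, 0 < x → x < l1 → PP m U x := by
    intro x hx hxl
    by_contra hc
    exact absurd (csInf_le hDb (show x ∈ D from ⟨hx, hc⟩)) (not_le.2 hxl)
  have hcl : 0 < l1 → PP m U l1 := by
    intro hpos i y hy
    have hy0 : 0 < ‖y‖ := hpos.trans hy
    have hct : Continuous fun t : ℝ => Ul m t (U i) y := by
      unfold Ul iv
      have := h.cont i
      fun_prop
    have ht : Tendsto (fun t : ℝ => Ul m t (U i) y) (𝓝[<] l1) (𝓝 (Ul m l1 (U i) y)) :=
      (hct.tendsto l1).mono_left nhdsWithin_le_nhds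
    refine le_of_tendsto ht ?_
    filter_upwards [Ioo_mem_nhdsLT hpos] with t ht
    exact hlt t ht.1 ht.2 i y (ht.2.trans hy)
  have hst : ∀ᶠ t in 𝓝[>] l1, PP m U t := by
    refine h.step hτ h0 fun i hi δ hδ => ?_
    rcases h0.eq_or_lt with he | hpos
    · rw [← he]; exact h.start i hi hδ
    · exact h.contn hτ hpos (hcl hpos) i hi hδ
  obtain ⟨e, he, hsub⟩ := mem_nhdsGT_iff_exists_Ioo_subset.1 hst
  obtain ⟨b, hbD, hbe⟩ := exists_lt_of_csInf_lt hDne (show sInf D < e from he)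
  have hb1 : l1 ≤ b := csInf_le hDb hbD
  rcases hb1.eq_or_lt with hb | hb
  · exact hbD.2 (hb ▸ hcl (hb ▸ hbD.1))
  · exact hbD.2 (hsub ⟨hb, hbe⟩)

lemma GI.le_all {n p m : ℕ} {s B κ : ℝ} {U : Fin p → Eu n → ℝ} (h : GI m s B κ U) (hτ : (m : ℝ) * s < n + 4)
    (i : Fin p) (w y : Eu n) : U i w ≤ U i y := by
  by_cases hwy : y = w
  · rw [hwy]
  have hd : 0 < ‖y - w‖ := norm_pos_iff.2 (sub_ne_zero.2 hwy)
  have key : ∀ r ∈ Set.Ioo (0 : ℝ) 1, r ^ m * U i w ≤ U i y := by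
    rintro r ⟨hr0, hr1⟩
    have h1r : 0 < 1 - r := by linarith
    set Y : Eu n := (1 / (1 - r)) • (y - w) with hY
    have hYn : ‖Y‖ = ‖y - w‖ / (1 - r) := by
      rw [hY, norm_smul, Real.norm_of_nonneg (by positivity)]; field_simp
    have hY0 : 0 < ‖Y‖ := by rw [hYn]; positivity
    have hs1 : Real.sqrt r < 1 := by rw [Real.sqrt_lt' one_pos]; linarith
    have hs0 : 0 < Real.sqrt r := Real.sqrt_pos.2 hr0
    set l := Real.sqrt r * ‖Y‖ with hl
    have hl0 : 0 < l := by positivity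
    have hlY : l / ‖Y‖ = Real.sqrt r := by rw [hl]; field_simp
    have hP := (h.translate (w - (r / (1 - r)) • (y - w))).allPP hτ hl0 i Y (by
      rw [hl]; exact mul_lt_of_lt_one_left hY0 hs1)
    rw [Ul, iv, hlY, Real.sq_sqrt hr0.le] at hP
    have e1 : w - (r / (1 - r)) • (y - w) + r • Y = w := by
      rw [hY, smul_smul, mul_one_div]; abel
    have e2 : w - (r / (1 - r)) • (y - w) + Y = y := by
      have : (1 / (1 - r)) • (y - w) = (r / (1 - r)) • (y - w) + (y - w) := by
        have e3 : 1 / (1 - r) = r / (1 - r) + 1 := by field_simp; ring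
        rw [e3, add_smul, one_smul]
      rw [hY, this]; abel
    beta_reduce at hP
    rw [e1, e2] at hP
    refine le_trans (mul_le_mul_of_nonneg_right ?_ (h.nn i w)) hP
    refine pow_le_pow_left₀ hr0.le ?_ m
    calc r = Real.sqrt r * Real.sqrt r := (Real.mul_self_sqrt hr0.le).symm
      _ ≤ Real.sqrt r * 1 := by gcongr
      _ = _ := mul_one _
  have ht : Tendsto (fun r : ℝ => r ^ m * U i w) (𝓝[<] 1) (𝓝 (1 ^ m * U i w)) :=
    ((by fun_prop : Continuous fun r : ℝ => r ^ m * U i w).tendsto 1).mono_left nhdsWithin_le_nhds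
  rw [one_pow, one_mul] at ht
  refine le_of_tendsto ht ?_
  filter_upwards [Ioo_mem_nhdsLT (show (0 : ℝ) < 1 by norm_num)] with r hr using key r hr

lemma GI.zero {n p m : ℕ} {s B κ : ℝ} {U : Fin p → Eu n → ℝ} (h : GI m s B κ U) (hτ : (m : ℝ) * s < n + 4)
    (i : Fin p) : U i 0 = 0 := by
  have hc : ∀ j x, U j x = U j 0 := fun j x => le_antisymm (h.le_all hτ j x 0) (h.le_all hτ j 0 x)
  have h1 := h.eqn i 0
  simp only [hc, zero_sub, norm_neg] at h1
  rw [integral_mul_const] at h1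
  have h2 := Measure.integral_comp_smul (volume : Measure (Eu n)) (fun z => (‖z‖ ^ m)⁻¹) (2 : ℝ)
  simp only [norm_smul, Real.norm_ofNat, mul_pow, mul_inv, finrank_euclideanSpace_fin, smul_eq_mul] at h2
  rw [integral_const_mul] at h2
  set J := ∫ z : Eu n, (‖z‖ ^ m)⁻¹
  have hJ : J = 0 := by
    rw [h.hn, abs_of_nonneg (by positivity), pow_add, mul_inv, mul_assoc] at h2
    have h3 : J = (2 ^ 4)⁻¹ * J := mul_left_cancel₀ (by positivity) h2
    norm_num at h3
    linarith
  rw [hJ, zero_mul] at h1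
  exact (mul_eq_zero.1 h1).resolve_left h.hκ.ne'

lemma mk_GI {n m p : ℕ} (hn : n = m + 4) (hm : 1 ≤ m) {s B : ℝ} (hs : 1 < s)
    {U : Fin p → Eu n → ℝ} (hc : ∀ i, Continuous (U i)) (hU : ∀ R, IS m s B R U) : GI m s B (kap n m) U := by
  refine ⟨hn, hm, hs, kap_pos hn hm, hc, (hU 0).2.1,
    fun i x => (le_abs_self _).trans ((abs_le_vn (fun j => U j x) i).trans ((hU 0).2.2.1 x)), fun i y => ?_, fun i y => ?_⟩
  · have := (global_int hn hm hs hc hU i y).1.comp_sub_right y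
    refine this.congr (Eventually.of_forall fun z => ?_)
    simp only [add_sub_cancel]
    rw [norm_sub_rev]
  · rw [(global_int hn hm hs hc hU i y).2, ← integral_sub_right_eq_self _ y]
    refine integral_congr_ae (Eventually.of_forall fun z => ?_)
    simp only [add_sub_cancel]
    rw [norm_sub_rev]

/-- a priori interior upper bound, with a constant depending
only on `n`, `p` and `s`, for nonnegative solutions on the unit ball that
extend continuously to the closed ball. -/
theorem statement15 (n p : ℕ) (hn : 5 ≤ n) (hp : 1 ≤ p) (s : ℝ)
    (hs1 : 1 < s) (hs2 : s < ((n : ℝ) + 4) / ((n : ℝ) - 4)) :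
    ∃ C > (0 : ℝ),
      ∀ U : Fin p → EuclideanSpace ℝ (Fin n) → ℝ,
        (∀ i, ∀ x ∈ Metric.ball (0 : EuclideanSpace ℝ (Fin n)) 1, 0 ≤ U i x) →
        (∀ i, ContDiffOn ℝ 4 (U i) (Metric.ball (0 : EuclideanSpace ℝ (Fin n)) 1)) →
        (∀ i, ∀ x ∈ Metric.ball (0 : EuclideanSpace ℝ (Fin n)) 1,
          bilap (U i) x = (vnorm U x) ^ (s - 1) * U i x) →
        (∀ i, ∃ g : EuclideanSpace ℝ (Fin n) → ℝ,
          ContinuousOn g (Metric.closedBall (0 : EuclideanSpace ℝ (Fin n)) 1) ∧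
          ∀ x ∈ Metric.ball (0 : EuclideanSpace ℝ (Fin n)) 1, g x = U i x) →
        ∀ x ∈ Metric.ball (0 : EuclideanSpace ℝ (Fin n)) 1,
          vnorm U x ≤ C * (1 - ‖x‖) ^ (-(4 / (s - 1))) := by
  obtain ⟨m, rfl⟩ : ∃ m, n = m + 4 := ⟨n - 4, by omega⟩
  have hm : 1 ≤ m := by omega
  have hτ : (m : ℝ) * s < ((m + 4 : ℕ) : ℝ) + 4 := by
    have hm0 : (0 : ℝ) < m := by exact_mod_cast hm
    push_cast at hs2 ⊢
    rw [add_sub_cancel_right, lt_div_iff₀ hm0] at hs2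
    linarith
  by_contra hcon
  push Not at hcon
  have H : ∀ k : ℕ, ∃ V : Fin p → Eu (m + 4) → ℝ, IS m s (2 ^ (4 / (s - 1))) k V ∧ vn (fun j => V j 0) = 1 := by
    intro k
    obtain ⟨U, h1, h2, h3, h4, x, hx, hlt⟩ := hcon ((2 * ((k : ℝ) + 1)) ^ (4 / (s - 1))) (by positivity)
    have hx1 : 0 < 1 - ‖x‖ := by
      have := hx
      rw [mem_ball, dist_zero_right] at this; linarith
    rw [Real.rpow_neg hx1.le, ← div_eq_mul_inv, div_lt_iff₀ (by positivity)] at hlt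
    obtain ⟨V, v1, v2, v3⟩ := blow hs1 ⟨h1, h2, h3⟩ h4 hx (R := (k : ℝ) + 1) (by positivity) hlt.le
    have hIS := sol_IS (n := m + 4) rfl (B := 2 ^ (4 / (s - 1))) (by positivity) v1 v2
    refine ⟨_, ⟨hIS.1, hIS.2.1, hIS.2.2.1, fun i y ρ hρ hy => hIS.2.2.2 i y ρ hρ (by linarith)⟩, ?_⟩
    have h0 : (0 : Eu (m + 4)) ∈ ball (0 : Eu (m + 4)) ((k : ℝ) + 1) := mem_ball_self (by positivity)
    simp only [Set.indicator_of_mem h0]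
    exact v3
  obtain ⟨U, u1, u2, u3⟩ := limit_exists rfl hm hs1 H
  have hz := (mk_GI rfl hm hs1 u1 u2).zero hτ
  simp [vn, hz] at u3
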